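/- Let G be a plane graph with outer cycle C, let p1, p2 ∈ V(C), and let L be a list assignment for G such that |L(v)| ≥ 5 for every v ∈ V(G) − V(C), |L(v)| ≥ 3 for every v ∈ V(C) − {p1, p2}, |L(p1)| ≥ 2 and |L(p2)| ≥ 2. Then G has an L-coloring. -/

import Mathlib

/-!
Common definitions: plane graphs (given by a concrete embedding in the plane),
outer face, canvases, list colorings, governments, harmonicas and coloring
harmonicas, following Postle–Thomas,
"Five-list-coloring graphs on surfaces III".
-/

open Set

universe u

/-- A finite simple graph together with an embedding in the plane:
each vertex gets a point, each edge a simple arc joining its endpoints;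
arcs avoid other vertices, and two distinct edges meet only in common
endpoints. -/
structure PlaneGraph (V : Type u) where
  verts : Set V
  Adj : V → V → Prop
  finite_verts : verts.Finite
  adj_symm : ∀ u v, Adj u v → Adj v u
  adj_irrefl : ∀ v, ¬Adj v v
  adj_mem : ∀ u v, Adj u v → u ∈ verts
  pos : V → ℝ × ℝ
  arc : Sym2 V → Set (ℝ × ℝ)
  pos_injOn : Set.InjOn pos verts
  arc_arc : ∀ u v, Adj u v → ∃ f : ℝ → ℝ × ℝ,
    ContinuousOn f (Set.Icc 0 1) ∧ Set.InjOn f (Set.Icc 0 1) ∧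
    f '' Set.Icc 0 1 = arc s(u, v) ∧ f 0 = pos u ∧ f 1 = pos v
  arc_avoid : ∀ u v, Adj u v → ∀ w ∈ verts, pos w ∈ arc s(u, v) → w = u ∨ w = v
  arc_meet : ∀ u v x y, Adj u v → Adj x y → s(u, v) ≠ s(x, y) →
    arc s(u, v) ∩ arc s(x, y) ⊆ pos '' (({u, v} : Set V) ∩ ({x, y} : Set V))

namespace PlaneGraph

variable {V : Type u}

/-- The point set of the drawing of the plane graph. -/
def image (G : PlaneGraph V) : Set (ℝ × ℝ) :=
  G.pos '' G.verts ∪ ⋃ (u : V) (v : V) (_ : G.Adj u v), G.arc s(u, v)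

/-- The outer (unbounded) face of the drawing. -/
def outerFace (G : PlaneGraph V) : Set (ℝ × ℝ) :=
  {p | p ∉ G.image ∧ ¬Bornology.IsBounded (connectedComponentIn G.imageᶜ p)}

/-- A vertex incident with (i.e. on the boundary of) the outer face. -/
def OnOuter (G : PlaneGraph V) (v : V) : Prop := G.pos v ∈ frontier G.outerFace

/-- An edge incident with (i.e. on the boundary of) the outer face. -/
def EdgeOnOuter (G : PlaneGraph V) (u v : V) : Prop :=
  G.arc s(u, v) ⊆ frontier G.outerFace

/-- The vertices of the boundary of the outer face. -/
def boundaryVerts (G : PlaneGraph V) : Set V := {v | v ∈ G.verts ∧ G.OnOuter v}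

/-- Connectivity of a plane graph. -/
def Connected (G : PlaneGraph V) : Prop :=
  G.verts.Nonempty ∧ ∀ u ∈ G.verts, ∀ v ∈ G.verts, Relation.ReflTransGen G.Adj u v

/-- `H` is a (plane) subgraph of `G`, drawn the same way. -/
def IsSubgraph (H G : PlaneGraph V) : Prop :=
  H.verts ⊆ G.verts ∧ (∀ u v, H.Adj u v → G.Adj u v) ∧
  (∀ v ∈ H.verts, H.pos v = G.pos v) ∧
  (∀ u v, H.Adj u v → H.arc s(u, v) = G.arc s(u, v))

/-- Delete a set of vertices (and all incident edges) from a plane graph. -/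
def deleteVerts (G : PlaneGraph V) (s : Set V) : PlaneGraph V where
  verts := G.verts \ s
  Adj u v := G.Adj u v ∧ u ∉ s ∧ v ∉ s
  finite_verts := G.finite_verts.subset Set.diff_subset
  adj_symm := fun u v h => ⟨G.adj_symm u v h.1, h.2.2, h.2.1⟩
  adj_irrefl := fun v h => G.adj_irrefl v h.1
  adj_mem := fun u v h => ⟨G.adj_mem u v h.1, h.2.1⟩
  pos := G.pos
  arc := G.arc
  pos_injOn := G.pos_injOn.mono Set.diff_subset
  arc_arc := fun u v h => G.arc_arc u v h.1
  arc_avoid := fun u v h w hw hm => G.arc_avoid u v h.1 w hw.1 hm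
  arc_meet := fun u v x y h h' hne => G.arc_meet u v x y h.1 h'.1 hne

/-- `G` has a proper coloring from the lists `L`. -/
def HasLColoring (G : PlaneGraph V) (L : V → Finset ℕ) : Prop :=
  ∃ φ : V → ℕ, (∀ v ∈ G.verts, φ v ∈ L v) ∧ ∀ u v, G.Adj u v → φ u ≠ φ v

/-- A vertex of degree exactly one. -/
def DegreeOne (G : PlaneGraph V) (x : V) : Prop :=
  (∃ a, G.Adj x a) ∧ ∀ a b, G.Adj x a → G.Adj x b → a = b

end PlaneGraph

/-- The cyclic successor of an index in a list. -/
def cycNext {V : Type u} (C : List V) (i : Fin C.length) : Fin C.length :=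
  ⟨((i : ℕ) + 1) % C.length, Nat.mod_lt _ (lt_of_le_of_lt (Nat.zero_le _) i.isLt)⟩

/-- The list `C` is a cycle of `G` whose image is exactly the boundary of the
outer face of `G`; i.e. `G` is a plane graph with outer cycle `C`. -/
def PlaneGraph.IsOuterCycle {V : Type u} (G : PlaneGraph V) (C : List V) : Prop :=
  C.Nodup ∧ 3 ≤ C.length ∧ (∀ v ∈ C, v ∈ G.verts) ∧
  (∀ i : Fin C.length, G.Adj (C.get i) (C.get (cycNext C i))) ∧
  frontier G.outerFace =
    G.pos '' {v | v ∈ C} ∪ ⋃ i : Fin C.length, G.arc s(C.get i, C.get (cycNext C i))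

/-- `pq` is an edge of the cycle (given as a list) `C`. -/
def IsCycleEdge {V : Type u} (C : List V) (p q : V) : Prop :=
  ∃ i : Fin C.length, s(p, q) = s(C.get i, C.get (cycNext C i))

/-- `(G, S, L)` is a canvas, where the subgraph `S` of the boundary of the
outer face of `G` is given by its vertex set `Sverts` and adjacency `SAdj`. -/
structure IsCanvas {V : Type u} (G : PlaneGraph V) (Sverts : Set V) (SAdj : V → V → Prop)
    (L : V → Finset ℕ) : Prop where
  sadj_symm : ∀ u v, SAdj u v → SAdj v u
  sadj_sub : ∀ u v, SAdj u v → G.Adj u v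
  sadj_mem : ∀ u v, SAdj u v → u ∈ Sverts
  sverts_sub : Sverts ⊆ G.verts
  sverts_outer : ∀ v ∈ Sverts, G.OnOuter v
  sedges_outer : ∀ u v, SAdj u v → G.EdgeOnOuter u v
  lists_nonempty : ∀ v ∈ G.verts, (L v).Nonempty
  card_inner : ∀ v ∈ G.verts, ¬G.OnOuter v → 5 ≤ (L v).card
  card_outside_S : ∀ v ∈ G.verts, v ∉ Sverts → 3 ≤ (L v).card
  scolorable : ∃ φ : V → ℕ, (∀ v ∈ Sverts, φ v ∈ L v) ∧ ∀ u v, SAdj u v → φ u ≠ φ v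

/-- The adjacency relation of the single-edge path `p₁p₂`. -/
def pathAdj {V : Type u} (p1 p2 : V) : V → V → Prop :=
  fun u v => (u = p1 ∧ v = p2) ∨ (u = p2 ∧ v = p1)

/-- `(G, P, L)` is a canvas whose precolored subgraph is a path `P = p₁p₂` of
length one (in the boundary of the outer face of `G`). -/
def IsPathCanvas {V : Type u} (G : PlaneGraph V) (p1 p2 : V) (L : V → Finset ℕ) : Prop :=
  p1 ≠ p2 ∧ IsCanvas G {p1, p2} (pathAdj p1 p2) L

/-- `c = (c₁, c₂)` is a proper `L`-coloring of the edge `p₁p₂`. -/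
def ProperEdgeColoring {V : Type u} (L : V → Finset ℕ) (p1 p2 : V) (c : ℕ × ℕ) : Prop :=
  c.1 ∈ L p1 ∧ c.2 ∈ L p2 ∧ c.1 ≠ c.2

/-- `Φ_T(P', 𝒞)`: the colorings of the edge `q₁q₂` extendable to an `L`-coloring
of `G` whose restriction to `p₁p₂` lies in `C`. -/
def Phi {V : Type u} (G : PlaneGraph V) (L : V → Finset ℕ) (p1 p2 q1 q2 : V)
    (C : Set (ℕ × ℕ)) : Set (ℕ × ℕ) :=
  {c | ∃ φ : V → ℕ, (∀ v ∈ G.verts, φ v ∈ L v) ∧ (∀ u v, G.Adj u v → φ u ≠ φ v) ∧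
    (φ p1, φ p2) ∈ C ∧ φ q1 = c.1 ∧ φ q2 = c.2}

/-- The set of colors used on the first vertex of the path. -/
def fstColors (C : Set (ℕ × ℕ)) : Set ℕ := Prod.fst '' C

/-- The set of colors used on the second vertex of the path. -/
def sndColors (C : Set (ℕ × ℕ)) : Set ℕ := Prod.snd '' C

/-- A dictatorship: at least two (distinct) colorings, all agreeing on one of
the two vertices (the dictator). -/
def IsDictatorship (C : Set (ℕ × ℕ)) : Prop :=
  (∃ c ∈ C, ∃ d ∈ C, c ≠ d) ∧
  ((∃ a, ∀ c ∈ C, c.1 = a) ∨ (∃ a, ∀ c ∈ C, c.2 = a))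

/-- A democracy: exactly the two colorings `(x, y)` and `(y, x)`. -/
def IsDemocracy (C : Set (ℕ × ℕ)) : Prop :=
  ∃ x y : ℕ, x ≠ y ∧ C = {(x, y), (y, x)}

/-- A government is a dictatorship or a democracy. -/
def IsGovernment (C : Set (ℕ × ℕ)) : Prop := IsDictatorship C ∨ IsDemocracy C

/-- A confederacy: not a government, but the union of two governments. -/
def IsConfederacy (C : Set (ℕ × ℕ)) : Prop :=
  ¬IsGovernment C ∧ ∃ C1 C2 : Set (ℕ × ℕ), IsGovernment C1 ∧ IsGovernment C2 ∧ C = C1 ∪ C2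

/-- The canvas `(G, p₁p₂, L)` is a harmonica from the path `p₁p₂` to the path
`q₁q₂` with government `C`. -/
inductive IsHarmonica {V : Type u} (L : V → Finset ℕ) :
    PlaneGraph V → V → V → V → V → Set (ℕ × ℕ) → Prop where
  /-- Rule (i): `G = P = P'`. -/
  | same (G : PlaneGraph V) (p1 p2 q1 q2 : V) (C : Set (ℕ × ℕ))
      (hcanvas : IsPathCanvas G p1 p2 L)
      (hproper : ∀ c ∈ C, ProperEdgeColoring L p1 p2 c)
      (hgov : IsGovernment C)
      (hq : (q1 = p1 ∧ q2 = p2) ∨ (q1 = p2 ∧ q2 = p1))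
      (hverts : G.verts = {p1, p2})
      (hedges : ∀ u v, G.Adj u v → pathAdj p1 p2 u v) :
      IsHarmonica L G p1 p2 q1 q2 C
  /-- Rule (ii): `C` is a dictatorship, `G = P ∪ P'`, `V(P) ∩ V(P') = {z}`
  where `z` is the dictator. -/
  | cherry (G : PlaneGraph V) (p1 p2 q1 q2 z : V) (C : Set (ℕ × ℕ))
      (hcanvas : IsPathCanvas G p1 p2 L)
      (hproper : ∀ c ∈ C, ProperEdgeColoring L p1 p2 c)
      (hdict : IsDictatorship C)
      (hq : q1 ≠ q2) (hqadj : G.Adj q1 q2) (hqout : G.EdgeOnOuter q1 q2)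
      (hverts : G.verts = {p1, p2, q1, q2})
      (hedges : ∀ u v, G.Adj u v → pathAdj p1 p2 u v ∨ pathAdj q1 q2 u v)
      (hz : (({p1, p2} : Set V) ∩ ({q1, q2} : Set V)) = {z})
      (hzdict : (z = p1 ∧ ∃ a, ∀ c ∈ C, c.1 = a) ∨ (z = p2 ∧ ∃ a, ∀ c ∈ C, c.2 = a)) :
      IsHarmonica L G p1 p2 q1 q2 C
  /-- Rule (iii): `C` is a dictatorship with dictator `z ∈ V(P)` in color `c`,
  sitting on a triangle `z u₁ u₂`. -/
  | dict (G : PlaneGraph V) (p1 p2 q1 q2 z w u1 u2 : V) (c : ℕ) (L0 : Finset ℕ)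
      (C C' : Set (ℕ × ℕ))
      (hcanvas : IsPathCanvas G p1 p2 L)
      (hproper : ∀ d ∈ C, ProperEdgeColoring L p1 p2 d)
      (hdict : IsDictatorship C)
      (hq : q1 ≠ q2) (hqadj : G.Adj q1 q2) (hqout : G.EdgeOnOuter q1 q2)
      (hz : (z = p1 ∧ w = p2 ∧ (∀ d ∈ C, d.1 = c) ∧
              (u1 = w → sndColors C = (L0 : Set ℕ)) ∧
              (u2 = w → sndColors C = (L0 : Set ℕ))) ∨
            (z = p2 ∧ w = p1 ∧ (∀ d ∈ C, d.2 = c) ∧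
              (u1 = w → fstColors C = (L0 : Set ℕ)) ∧
              (u2 = w → fstColors C = (L0 : Set ℕ))))
      (hzu1 : G.Adj z u1) (hzu2 : G.Adj z u2) (hu12 : G.Adj u1 u2)
      (hL0 : L0.card = 2)
      (hLu1 : u1 ∉ ({p1, p2} : Set V) → L u1 = L0 ∪ {c})
      (hLu2 : u2 ∉ ({p1, p2} : Set V) → L u2 = L0 ∪ {c})
      (hu1P : u1 ∈ ({p1, p2} : Set V) → u1 = w)
      (hu2P : u2 ∈ ({p1, p2} : Set V) → u2 = w)
      (hdem : IsDemocracy C')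
      (hC'1 : fstColors C' = (L0 : Set ℕ)) (hC'2 : sndColors C' = (L0 : Set ℕ))
      (hrec : IsHarmonica L (G.deleteVerts (({p1, p2} : Set V) \ {u1, u2})) u1 u2 q1 q2 C') :
      IsHarmonica L G p1 p2 q1 q2 C
  /-- Rule (iv), with `i = 1`: `C` is a democracy, `z` is a common neighbor of
  `p₁, p₂`, and `p₁` is deleted. -/
  | demo1 (G : PlaneGraph V) (p1 p2 q1 q2 z : V) (a b c : ℕ) (L0 : Finset ℕ)
      (C C' : Set (ℕ × ℕ))
      (hcanvas : IsPathCanvas G p1 p2 L)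
      (hproper : ∀ d ∈ C, ProperEdgeColoring L p1 p2 d)
      (hdemC : IsDemocracy C)
      (hq : q1 ≠ q2) (hqadj : G.Adj q1 q2) (hqout : G.EdgeOnOuter q1 q2)
      (hz1 : G.Adj z p1) (hz2 : G.Adj z p2)
      (hLz : L z = L0 ∪ {c})
      (hC1 : fstColors C = (L0 : Set ℕ)) (hC2 : sndColors C = (L0 : Set ℕ))
      (hab : a ≠ b) (hL0ab : (L0 : Set ℕ) = {a, b})
      (hC' : C' = {(c, a), (c, b)})
      (hrec : IsHarmonica L (G.deleteVerts {p1}) z p2 q1 q2 C') :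
      IsHarmonica L G p1 p2 q1 q2 C
  /-- Rule (iv), with `i = 2`: `C` is a democracy, `z` is a common neighbor of
  `p₁, p₂`, and `p₂` is deleted. -/
  | demo2 (G : PlaneGraph V) (p1 p2 q1 q2 z : V) (a b c : ℕ) (L0 : Finset ℕ)
      (C C' : Set (ℕ × ℕ))
      (hcanvas : IsPathCanvas G p1 p2 L)
      (hproper : ∀ d ∈ C, ProperEdgeColoring L p1 p2 d)
      (hdemC : IsDemocracy C)
      (hq : q1 ≠ q2) (hqadj : G.Adj q1 q2) (hqout : G.EdgeOnOuter q1 q2)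
      (hz1 : G.Adj z p1) (hz2 : G.Adj z p2)
      (hLz : L z = L0 ∪ {c})
      (hC1 : fstColors C = (L0 : Set ℕ)) (hC2 : sndColors C = (L0 : Set ℕ))
      (hab : a ≠ b) (hL0ab : (L0 : Set ℕ) = {a, b})
      (hC' : C' = {(c, a), (c, b)})
      (hrec : IsHarmonica L (G.deleteVerts {p2}) z p1 q1 q2 C') :
      IsHarmonica L G p1 p2 q1 q2 C

/-- `(G, L)` is a coloring harmonica from `uv` to `w` (source `Sum.inr (u, v)`)
or from `u` to `w` (source `Sum.inl u`). -/
inductive IsColoringHarmonica {V : Type u} [DecidableEq V] :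
    PlaneGraph V → (V → Finset ℕ) → V ⊕ V × V → V → Prop where
  /-- `G` is a triangle with vertex set `{u, v, w}`, `L(u) = L(v) = L(w)` and
  `|L(u)| = 2`. -/
  | tri (G : PlaneGraph V) (L : V → Finset ℕ) (u v w : V)
      (hconn : G.Connected) (huv : u ≠ v) (huw : u ≠ w) (hvw : v ≠ w)
      (hu : G.OnOuter u) (hv : G.OnOuter v) (hw : G.OnOuter w)
      (huvout : G.EdgeOnOuter u v)
      (hverts : G.verts = {u, v, w})
      (hadjuv : G.Adj u v) (hadjvw : G.Adj v w) (hadjuw : G.Adj u w)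
      (hLuv : L u = L v) (hLvw : L v = L w) (hcard : (L u).card = 2) :
      IsColoringHarmonica G L (Sum.inr (u, v)) w
  /-- There is a triangle `uvz` on the outer face; delete one or both of
  `u, v` and recurse from `z`. -/
  | step (G : PlaneGraph V) (L : V → Finset ℕ) (u v w z : V) (s : Set V)
      (hconn : G.Connected) (huv : u ≠ v) (huw : u ≠ w) (hvw : v ≠ w)
      (hu : G.OnOuter u) (hv : G.OnOuter v) (hw : G.OnOuter w)
      (huvout : G.EdgeOnOuter u v)
      (hadjuv : G.Adj u v) (hadjuz : G.Adj u z) (hadjvz : G.Adj v z)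
      (hz : G.OnOuter z)
      (hLuv : L u = L v) (hsub : L u ⊆ L z)
      (hcardu : (L u).card = 2) (hcardz : (L z).card = 3)
      (hs : s = {u} ∨ s = {v} ∨ s = ({u, v} : Set V))
      (hrec : IsColoringHarmonica (G.deleteVerts s)
        (Function.update L z (L z \ L u)) (Sum.inl z) w) :
      IsColoringHarmonica G L (Sum.inr (u, v)) w
  /-- `|L(u)| = 1`, `u` sits on a triangle `uxy`; delete `u` and recurse
  from `xy`. -/
  | vert (G : PlaneGraph V) (L : V → Finset ℕ) (u w x y : V)
      (hconn : G.Connected) (huw : u ≠ w)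
      (hu : G.OnOuter u) (hw : G.OnOuter w)
      (hx : G.OnOuter x) (hy : G.OnOuter y)
      (hadjux : G.Adj u x) (hadjuy : G.Adj u y) (hadjxy : G.Adj x y)
      (hcardu : (L u).card = 1)
      (hLxy : L x \ L u = L y \ L u) (hcardx : (L x \ L u).card = 2)
      (hrec : IsColoringHarmonica (G.deleteVerts {u})
        (Function.update (Function.update L x (L x \ L u)) y (L y \ L u))
        (Sum.inr (x, y)) w) :
      IsColoringHarmonica G L (Sum.inl u) w

/-- `(G, L)` contains a coloring harmonica `(H, L')` with the given source and
target: `H` is a subgraph of `G` and `L'` agrees with `L` on `V(H)`. -/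
def ContainsColoringHarmonica {V : Type u} [DecidableEq V] (G : PlaneGraph V)
    (L : V → Finset ℕ) (st : V ⊕ V × V) (w : V) : Prop :=
  ∃ (H : PlaneGraph V) (L' : V → Finset ℕ), H.IsSubgraph G ∧
    (∀ x ∈ H.verts, L' x = L x) ∧ IsColoringHarmonica H L' st w

/-- `v` is a cutvertex of the boundary of the outer face of `G`. -/
def BoundaryCutvertex {V : Type u} (G : PlaneGraph V) (v : V) : Prop :=
  ∃ a b : V, a ∈ G.boundaryVerts ∧ b ∈ G.boundaryVerts ∧ a ≠ v ∧ b ≠ v ∧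
    Relation.ReflTransGen (fun x y => G.Adj x y ∧ G.EdgeOnOuter x y) a b ∧
    ¬Relation.ReflTransGen
      (fun x y => G.Adj x y ∧ G.EdgeOnOuter x y ∧ x ≠ v ∧ y ≠ v) a b

open Classical in
/-- The list assignment of the democratic reduction `T(P, L0, x)`:
remove the colors of `L0` from the list of `x` and from the lists of all
neighbors of `P` other than `y`. -/
noncomputable def reducedL {V : Type u} (G : PlaneGraph V) (L : V → Finset ℕ)
    (L0 : Finset ℕ) (Q : List V) (x y : V) : V → Finset ℕ := fun w =>
  if w = x ∨ (w ≠ y ∧ ∃ p ∈ Q, G.Adj w p) then L w \ L0 else L w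

/-- The vertex set of the precolored subgraph of the democratic reduction:
`S ∖ V(P)`, together with `x` as an isolated vertex if its new list is
smaller than 3. -/
def reducedSverts {V : Type u} (Sverts : Set V) (Q : List V) (x : V)
    (L' : V → Finset ℕ) : Set V :=
  {v | (v ∈ Sverts ∧ v ∉ Q) ∨ (v = x ∧ (L' x).card < 3)}

/-- The adjacency of the precolored subgraph of the democratic reduction:
`S ∖ V(P)`. -/
def reducedSAdj {V : Type u} (SAdj : V → V → Prop) (Q : List V) : V → V → Prop :=
  fun u v => SAdj u v ∧ u ∉ Q ∧ v ∉ Q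

/-!
Put an apex in the outer face and join it by spokes to the boundary vertices. A parity argument for
the winding numbers of the differences of points on disjoint edges shows that `K₅` and `K₃,₃` have
no drawing, and these two obstructions give all the boundary structure that is needed: if no
boundary edge separates the graph, then every boundary vertex has at most two boundary neighbors and
boundary paths have no chords.

If a boundary edge separates the graph, color one side and extend the coloring to the other.
Otherwise, as in Thomassen's proof that planar graphs are 5-choosable, delete a boundary path after
removing two of its colors from the lists of its inner neighbors. To make this work with two lists
of size two at arbitrary places of the boundary, one controls the precolorings of a boundary edge
that do not extend across a part of the graph: they form part of a *government*, that is, they share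
a color at one end (a dictatorship) or use only two colors (a democracy). No government contains all
precolorings of an edge from lists of sizes two and three.
-/

section Winding

open Complex

theorem exists_exp_eq_path_sub {a b c d : ℂ} (α : Path a b) (β : Path c d)
    (h : ∀ s t, α s ≠ β t) :
    ∃ H : unitInterval × unitInterval → ℂ, Continuous H ∧ ∀ s t, exp (H (s, t)) = α s - β t := by
  let K : C(unitInterval × unitInterval, {z : ℂ // z ≠ 0}) :=
    ⟨fun q => ⟨α q.1 - β q.2, sub_ne_zero.2 (h q.1 q.2)⟩, by fun_prop⟩
  let side : C(unitInterval, {z : ℂ // z ≠ 0}) := ⟨fun t => K (0, t), by fun_prop⟩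
  have hstart : side 0 = ⟨_, (log (side 0).1).exp_ne_zero⟩ :=
    Subtype.ext (exp_log (side 0).2).symm
  obtain ⟨Γ, hΓ, -⟩ := isCoveringMap_exp.exists_path_lifts side (log (side 0).1) hstart
  have hK : ∀ t, K (0, t) = ⟨_, (Γ t).exp_ne_zero⟩ := fun t => (congrFun hΓ t).symm
  refine ⟨isCoveringMap_exp.liftHomotopy K Γ hK, map_continuous _, fun s t => ?_⟩
  exact congrArg Subtype.val (congrFun (isCoveringMap_exp.liftHomotopy_lifts K Γ hK) (s, t))

theorem sub_eq_sub_of_exp_eq {f g : unitInterval → ℂ} (hf : Continuous f) (hg : Continuous g)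
    (h : ∀ t, exp (f t) = exp (g t)) : f 1 - f 0 = g 1 - g 0 := by
  have hfg : f = fun t => g t + (f 0 - g 0) := by
    refine isCoveringMap_exp.eq_of_comp_eq hf (by fun_prop) ?_ 0 (by ring)
    funext t
    apply Subtype.ext
    simp only [Function.comp]
    rw [exp_add, exp_sub, h 0, div_self (exp_ne_zero _), mul_one, h]
  rw [congrFun hfg 1]
  ring

variable {ι : Type*} [LinearOrder ι]

/-- The sign of an ordered pair of distinct elements of a linear order: the difference of the two
chosen logarithms `logDiff pos x y` and `logDiff pos y x` is this multiple of `π * I`. -/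
def orderSign (x y : ι) : ℤ := if x < y then -1 else 1

/-- A logarithm of `pos x - pos y`, chosen so that exchanging `x` and `y` has a controlled
effect. -/
noncomputable def logDiff (pos : ι → ℂ) (x y : ι) : ℂ :=
  log (pos (min x y) - pos (max x y)) + if x < y then 0 else Real.pi * I

theorem exp_logDiff {pos : ι → ℂ} {x y : ι} (hxy : pos x ≠ pos y) :
    exp (logDiff pos x y) = pos x - pos y := by
  rcases lt_or_ge x y with h | h
  · simp [logDiff, h, h.le, exp_log (sub_ne_zero.2 hxy)]
  · simp [logDiff, h, not_lt.2 h, exp_add, exp_log (sub_ne_zero.2 hxy.symm)]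

theorem logDiff_sub_logDiff_swap (pos : ι → ℂ) {x y : ι} (hxy : x ≠ y) :
    logDiff pos x y - logDiff pos y x = orderSign x y * (Real.pi * I) := by
  rcases lt_or_gt_of_ne hxy with h | h <;>
    simp [logDiff, orderSign, h, h.le, not_lt.2 h.le]

theorem exists_int_of_lift_path_sub {pos : ι → ℂ} {i j v : ι} (γ : Path (pos i) (pos j)) :
    ∃ n : ℤ, ∀ g : unitInterval → ℂ, Continuous g → (∀ t, exp (g t) = γ t - pos v) →
      g 1 - g 0 = logDiff pos j v - logDiff pos i v + 2 * Real.pi * I * n := by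
  by_cases hex : ∃ g : unitInterval → ℂ, Continuous g ∧ ∀ t, exp (g t) = γ t - pos v
  · obtain ⟨g, hg, hexp⟩ := hex
    have h1 : exp (g 1) = pos j - pos v := by simpa using hexp 1
    have h0 : exp (g 0) = pos i - pos v := by simpa using hexp 0
    have hj : pos j ≠ pos v := sub_ne_zero.1 (h1 ▸ exp_ne_zero _)
    have hi : pos i ≠ pos v := sub_ne_zero.1 (h0 ▸ exp_ne_zero _)
    have hends : exp (g 1 - g 0) = exp (logDiff pos j v - logDiff pos i v) := by
      rw [exp_sub, exp_sub, h1, h0, exp_logDiff hj, exp_logDiff hi]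
    obtain ⟨n, hn⟩ := exp_eq_exp_iff_exists_int.1 hends
    refine ⟨n, fun g' hg' hexp' => ?_⟩
    rw [sub_eq_sub_of_exp_eq hg' hg fun t => (hexp' t).trans (hexp t).symm, hn]
    ring
  · exact ⟨0, fun g hg hexp => (hex ⟨g, hg, hexp⟩).elim⟩

/- The boundary of the square parametrizing the differences of points of two disjoint arcs has
winding number zero about the origin; each of its sides is the difference of an arc and a
vertex. -/
theorem exists_winding (pos : ι → ℂ) (D : ι → ι → Set ℂ) :
    ∃ n : ι → ι → ι → ℤ, ∀ i j k l, i ≠ k → i ≠ l → j ≠ k → j ≠ l →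
      JoinedIn (D i j) (pos i) (pos j) → JoinedIn (D k l) (pos k) (pos l) →
      Disjoint (D i j) (D k l) →
      orderSign j k + orderSign k i + orderSign l j + orderSign i l
        + 2 * (n i j k + n k l j - n i j l - n k l i) = 0 := by
  have hpath : ∀ i j, ∃ γ : Path (pos i) (pos j),
      JoinedIn (D i j) (pos i) (pos j) → ∀ t, γ t ∈ D i j := fun i j => by
    by_cases h : JoinedIn (D i j) (pos i) (pos j)
    · exact ⟨h.somePath, fun _ => h.somePath_mem⟩
    · exact ⟨PathConnectedSpace.somePath _ _, fun h' => absurd h' h⟩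
  choose γ hγ using hpath
  choose n hn using fun i j v => exists_int_of_lift_path_sub (v := v) (γ i j)
  refine ⟨n, fun i j k l hik hil hjk hjl hij hkl hdisj => ?_⟩
  obtain ⟨H, hH, hexp⟩ := exists_exp_eq_path_sub (γ i j) (γ k l)
    fun s t hst => Set.disjoint_left.1 hdisj (hγ i j hij s) (hst ▸ hγ k l hkl t)
  have side₁ := hn i j k (fun s => H (s, 0)) (by fun_prop) fun s => by simp [hexp]
  have side₂ := hn i j l (fun s => H (s, 1)) (by fun_prop) fun s => by simp [hexp]
  have side₃ := hn k l i (fun t => H (0, t) + Real.pi * I) (by fun_prop)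
    fun t => by simp [exp_add, hexp]
  have side₄ := hn k l j (fun t => H (1, t) + Real.pi * I) (by fun_prop)
    fun t => by simp [exp_add, hexp]
  have hpi : (Real.pi * I : ℂ) ≠ 0 := by simp [Real.pi_ne_zero]
  suffices h : (Real.pi * I : ℂ) * ((orderSign j k + orderSign k i + orderSign l j + orderSign i l
      + 2 * (n i j k + n k l j - n i j l - n k l i) : ℤ) : ℂ) = 0 by
    exact_mod_cast (mul_eq_zero.1 h).resolve_left hpi
  push_cast
  linear_combination side₂ - side₁ + side₃ - side₄ - logDiff_sub_logDiff_swap pos hjk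
    - logDiff_sub_logDiff_swap pos hik.symm - logDiff_sub_logDiff_swap pos hjl.symm
    - logDiff_sub_logDiff_swap pos hil

theorem not_completeGraph_five_drawing (pos : Fin 5 → ℂ) (D : Fin 5 → Fin 5 → Set ℂ)
    (hjoin : ∀ i j, i < j → JoinedIn (D i j) (pos i) (pos j))
    (hdisj : ∀ i j k l, i < j → k < l → i < k → j ≠ k → j ≠ l → Disjoint (D i j) (D k l)) :
    False := by
  obtain ⟨n, hn⟩ := exists_winding pos D
  have relation : ∀ i j k l, i < j ∧ k < l ∧ i < k ∧ j ≠ k ∧ j ≠ l → _ :=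
    fun i j k l ⟨hij, hkl, hik, hjk, hjl⟩ =>
      hn i j k l hik.ne (hik.trans hkl).ne hjk hjl (hjoin i j hij) (hjoin k l hkl)
        (hdisj i j k l hij hkl hik hjk hjl)
  clear hn
  have h₁ := relation 0 1 2 3 (by decide)
  have h₂ := relation 0 2 1 3 (by decide)
  have h₃ := relation 0 3 1 2 (by decide)
  have h₄ := relation 0 1 2 4 (by decide)
  have h₅ := relation 0 2 1 4 (by decide)
  have h₆ := relation 0 4 1 2 (by decide)
  have h₇ := relation 0 1 3 4 (by decide)
  have h₈ := relation 0 3 1 4 (by decide)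
  have h₉ := relation 0 4 1 3 (by decide)
  have h₁₀ := relation 0 2 3 4 (by decide)
  have h₁₁ := relation 0 3 2 4 (by decide)
  have h₁₂ := relation 0 4 2 3 (by decide)
  have h₁₃ := relation 1 2 3 4 (by decide)
  have h₁₄ := relation 1 3 2 4 (by decide)
  have h₁₅ := relation 1 4 2 3 (by decide)
  simp (decide := true) only [orderSign, if_true, if_false] at *
  omega

theorem not_completeBipartiteGraph_three_three_drawing (pos₁ pos₂ : Fin 3 → ℂ)
    (D : Fin 3 → Fin 3 → Set ℂ) (hjoin : ∀ i j, JoinedIn (D i j) (pos₁ i) (pos₂ j))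
    (hdisj : ∀ i j k l, i ≠ k → j ≠ l → Disjoint (D i j) (D k l)) : False := by
  obtain ⟨n, hn⟩ := exists_winding (ι := Fin 3 ⊕ₗ Fin 3) (Sum.elim pos₁ pos₂ ∘ ofLex)
    fun x y => Sum.elim (fun i => Sum.elim (fun _ => ∅) (D i) (ofLex y)) (fun _ => ∅) (ofLex x)
  have relation : ∀ i j k l : Fin 3, i ≠ k ∧ j ≠ l → _ := fun i j k l ⟨hik, hjl⟩ =>
    hn (toLex (.inl i)) (toLex (.inr j)) (toLex (.inl k)) (toLex (.inr l)) (by simpa) (by simp)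
      (by simp) (by simpa) (hjoin i j) (hjoin k l) (hdisj i j k l hik hjl)
  have h₁ := relation 0 0 1 1 (by decide)
  have h₂ := relation 0 0 1 2 (by decide)
  have h₃ := relation 0 1 1 0 (by decide)
  have h₄ := relation 0 1 1 2 (by decide)
  have h₅ := relation 0 2 1 0 (by decide)
  have h₆ := relation 0 2 1 1 (by decide)
  have h₇ := relation 0 0 2 1 (by decide)
  have h₈ := relation 0 0 2 2 (by decide)
  have h₉ := relation 0 1 2 0 (by decide)
  have h₁₀ := relation 0 1 2 2 (by decide)
  have h₁₁ := relation 0 2 2 0 (by decide)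
  have h₁₂ := relation 0 2 2 1 (by decide)
  have h₁₃ := relation 1 0 2 1 (by decide)
  have h₁₄ := relation 1 0 2 2 (by decide)
  have h₁₅ := relation 1 1 2 0 (by decide)
  have h₁₆ := relation 1 1 2 2 (by decide)
  have h₁₇ := relation 1 2 2 0 (by decide)
  have h₁₈ := relation 1 2 2 1 (by decide)
  clear hn relation
  simp (decide := true) only [orderSign, if_true, if_false] at *
  omega

end Winding

/-- `a` and `b` are joined by a walk of `G` all of whose vertices lie in `X`. -/
def Linked {V : Type*} (G : SimpleGraph V) (X : Set V) (a b : V) : Prop :=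
  ∃ p : G.Walk a b, ∀ x ∈ p.support, x ∈ X

namespace Linked

variable {V : Type*} {G : SimpleGraph V} {X Y : Set V} {a b c : V}

theorem left_mem (h : Linked G X a b) : a ∈ X :=
  let ⟨p, hp⟩ := h; hp a p.start_mem_support

theorem right_mem (h : Linked G X a b) : b ∈ X :=
  let ⟨p, hp⟩ := h; hp b p.end_mem_support

theorem refl (ha : a ∈ X) : Linked G X a a := ⟨.nil, by simpa using ha⟩

theorem of_adj (h : G.Adj a b) (ha : a ∈ X) (hb : b ∈ X) : Linked G X a b :=
  ⟨h.toWalk, by simp [ha, hb]⟩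

theorem mono (h : Linked G X a b) (hXY : X ⊆ Y) : Linked G Y a b :=
  let ⟨p, hp⟩ := h; ⟨p, fun x hx => hXY (hp x hx)⟩

theorem symm (h : Linked G X a b) : Linked G X b a :=
  let ⟨p, hp⟩ := h; ⟨p.reverse, by simpa using hp⟩

theorem trans (h : Linked G X a b) (h' : Linked G X b c) : Linked G X a c := by
  obtain ⟨p, hp⟩ := h
  obtain ⟨q, hq⟩ := h'
  refine ⟨p.append q, fun x hx => ?_⟩
  exact ((SimpleGraph.Walk.mem_support_append_iff p q).1 hx).elim (hp x) (hq x)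

theorem exists_first_hit {D : Set V} (h : Linked G X a b) (hb : b ∈ D) :
    ∃ d ∈ D, d ∈ X ∧ Linked G (insert d (X \ D)) a d := by
  obtain ⟨p, hp⟩ := h
  induction p with
  | nil => exact ⟨_, hb, hp _ (by simp), refl (by simp)⟩
  | @cons a c b hac q ih =>
    have ha : a ∈ X := hp a (by simp)
    by_cases haD : a ∈ D
    · exact ⟨a, haD, ha, refl (by simp)⟩
    · obtain ⟨d, hd, hdX, hcd⟩ := ih hb fun x hx => hp x (by simp [hx])
      exact ⟨d, hd, hdX, (of_adj hac (.inr ⟨ha, haD⟩) hcd.left_mem).trans hcd⟩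

end Linked

/-- A drawing in the plane of the subgraph of `G` induced on `A`, together with an extra vertex
(the apex) joined by spokes to the vertices of `S` in `A`. The arcs are only required to be
connected pieces of the plane that are disjoint for independent edges; this is all that the
planarity arguments need, and it is preserved when part of the graph is merged into the apex. -/
structure ApexDrawing {V : Type*} (A : Finset V) (G : SimpleGraph V) (S : Set V) where
  pos : V → ℂ
  apex : ℂ
  arc : V → V → Set ℂ
  spoke : V → Set ℂ
  arc_joined : ∀ {u v}, u ∈ A → v ∈ A → G.Adj u v → JoinedIn (arc u v) (pos u) (pos v)
  spoke_joined : ∀ {s}, s ∈ A → s ∈ S → JoinedIn (spoke s) apex (pos s)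
  arc_disjoint : ∀ {u v x y}, u ∈ A → v ∈ A → x ∈ A → y ∈ A → G.Adj u v → G.Adj x y →
    u ≠ x → u ≠ y → v ≠ x → v ≠ y → Disjoint (arc u v) (arc x y)
  spoke_disjoint : ∀ {s u v}, s ∈ A → s ∈ S → u ∈ A → v ∈ A → G.Adj u v → s ≠ u → s ≠ v →
    Disjoint (spoke s) (arc u v)

namespace ApexDrawing

variable {V : Type*} {A B : Finset V} {G : SimpleGraph V} {S T : Set V}

/-- The part of a drawing occupied by the edges with both ends in `X`. -/
def region (D : ApexDrawing A G S) (X : Set V) : Set ℂ :=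
  {z | ∃ u v, G.Adj u v ∧ u ∈ X ∧ v ∈ X ∧ z ∈ D.arc u v}

theorem joinedIn_region (D : ApexDrawing A G S) {X : Set V} (hX : X ⊆ A) {a b : V}
    (h : Linked G X a b) (hab : a ≠ b) : JoinedIn (D.region X) (D.pos a) (D.pos b) := by
  obtain ⟨p, hp⟩ := h
  induction p with
  | nil => exact absurd rfl hab
  | @cons a c b hac q ih =>
    have ha : a ∈ X := hp a (by simp)
    have hq : ∀ x ∈ q.support, x ∈ X := fun x hx => hp x (by simp [hx])
    have hc : c ∈ X := hq c q.start_mem_support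
    have hjoin : JoinedIn (D.region X) (D.pos a) (D.pos c) :=
      (D.arc_joined (hX ha) (hX hc) hac).mono fun z hz => ⟨a, c, hac, ha, hc, hz⟩
    rcases eq_or_ne c b with rfl | hcb
    · exact hjoin
    · exact hjoin.trans (ih hcb hq)

theorem disjoint_region (D : ApexDrawing A G S) {X Y : Set V} (hX : X ⊆ A) (hY : Y ⊆ A)
    (h : Disjoint X Y) : Disjoint (D.region X) (D.region Y) := by
  rw [Set.disjoint_left]
  rintro z ⟨u, v, huv, hu, hv, hz⟩ ⟨x, y, hxy, hx, hy, hz'⟩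
  exact Set.disjoint_left.1 (D.arc_disjoint (hX hu) (hX hv) (hY hx) (hY hy) huv hxy
    (h.ne_of_mem hu hx) (h.ne_of_mem hu hy) (h.ne_of_mem hv hx) (h.ne_of_mem hv hy)) hz hz'

theorem disjoint_spoke_region (D : ApexDrawing A G S) {s : V} (hsA : s ∈ A) (hsS : s ∈ S)
    {X : Set V} (hX : X ⊆ A) (hs : s ∉ X) : Disjoint (D.spoke s) (D.region X) := by
  rw [Set.disjoint_left]
  rintro z hz ⟨u, v, huv, hu, hv, hz'⟩
  exact Set.disjoint_left.1 (D.spoke_disjoint hsA hsS (hX hu) (hX hv) huv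
    (fun h => hs (h ▸ hu)) fun h => hs (h ▸ hv)) hz hz'

/- Together with the apex, the four linked vertices would form a drawing of `K₅`. -/
theorem not_pairwise_linked_four (D : ApexDrawing A G S) {a b c d : V}
    {Xab Xac Xad Xbc Xbd Xcd : Set V} (ha : a ∈ S) (hb : b ∈ S) (hc : c ∈ S) (hd : d ∈ S)
    (hXab : Xab ⊆ A) (hXac : Xac ⊆ A) (hXad : Xad ⊆ A)
    (hXbc : Xbc ⊆ A) (hXbd : Xbd ⊆ A) (hXcd : Xcd ⊆ A)
    (hab : Linked G Xab a b) (hac : Linked G Xac a c) (had : Linked G Xad a d)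
    (hbc : Linked G Xbc b c) (hbd : Linked G Xbd b d) (hcd : Linked G Xcd c d)
    (hab_cd : Disjoint Xab Xcd) (hac_bd : Disjoint Xac Xbd) (had_bc : Disjoint Xad Xbc) :
    False := by
  have haA := hXab hab.left_mem
  have hbA := hXab hab.right_mem
  have hcA := hXcd hcd.left_mem
  have hdA := hXcd hcd.right_mem
  refine not_completeGraph_five_drawing ![D.apex, D.pos a, D.pos b, D.pos c, D.pos d]
    ![![∅, D.spoke a, D.spoke b, D.spoke c, D.spoke d],
      ![∅, ∅, D.region Xab, D.region Xac, D.region Xad],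
      ![∅, ∅, ∅, D.region Xbc, D.region Xbd], ![∅, ∅, ∅, ∅, D.region Xcd],
      ![∅, ∅, ∅, ∅, ∅]] ?_ ?_
  · intro i j hij
    fin_cases i <;> fin_cases j <;> first | exact absurd hij (by decide) | skip
    · exact D.spoke_joined haA ha
    · exact D.spoke_joined hbA hb
    · exact D.spoke_joined hcA hc
    · exact D.spoke_joined hdA hd
    · exact D.joinedIn_region hXab hab (hac_bd.ne_of_mem hac.left_mem hbd.left_mem)
    · exact D.joinedIn_region hXac hac (hab_cd.ne_of_mem hab.left_mem hcd.left_mem)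
    · exact D.joinedIn_region hXad had (hab_cd.ne_of_mem hab.left_mem hcd.right_mem)
    · exact D.joinedIn_region hXbc hbc (hab_cd.ne_of_mem hab.right_mem hcd.left_mem)
    · exact D.joinedIn_region hXbd hbd (hab_cd.ne_of_mem hab.right_mem hcd.right_mem)
    · exact D.joinedIn_region hXcd hcd (hac_bd.ne_of_mem hac.right_mem hbd.right_mem)
  · intro i j k l hij hkl hik hjk hjl
    fin_cases i <;> fin_cases j <;> first | exact absurd hij (by decide) | skip
    all_goals fin_cases k <;>
      first | exact absurd hik (by decide) | exact absurd rfl hjk | skip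
    all_goals fin_cases l <;>
      first | exact absurd hkl (by decide) | exact absurd rfl hjl | skip
    · exact D.disjoint_spoke_region haA ha hXbc (disjoint_left.1 had_bc had.left_mem)
    · exact D.disjoint_spoke_region haA ha hXbd (disjoint_left.1 hac_bd hac.left_mem)
    · exact D.disjoint_spoke_region haA ha hXcd (disjoint_left.1 hab_cd hab.left_mem)
    · exact D.disjoint_spoke_region hbA hb hXac (disjoint_right.1 hac_bd hbd.left_mem)
    · exact D.disjoint_spoke_region hbA hb hXad (disjoint_right.1 had_bc hbc.left_mem)
    · exact D.disjoint_spoke_region hbA hb hXcd (disjoint_left.1 hab_cd hab.right_mem)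
    · exact D.disjoint_spoke_region hcA hc hXab (disjoint_right.1 hab_cd hcd.left_mem)
    · exact D.disjoint_spoke_region hcA hc hXad (disjoint_right.1 had_bc hbc.right_mem)
    · exact D.disjoint_spoke_region hcA hc hXbd (disjoint_left.1 hac_bd hac.right_mem)
    · exact D.disjoint_spoke_region hdA hd hXab (disjoint_right.1 hab_cd hcd.right_mem)
    · exact D.disjoint_spoke_region hdA hd hXac (disjoint_right.1 hac_bd hbd.right_mem)
    · exact D.disjoint_spoke_region hdA hd hXbc (disjoint_left.1 had_bc had.right_mem)
    · exact D.disjoint_region hXab hXcd hab_cd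
    · exact D.disjoint_region hXac hXbd hac_bd
    · exact D.disjoint_region hXad hXbc had_bc

/- Together with the apex, the two hubs `p` and `q` would form one side of a drawing of
`K₃,₃`. -/
theorem not_linked_two_three (D : ApexDrawing A G S) {p q : V} {x : Fin 3 → V}
    {X Y : Fin 3 → Set V} (hx : ∀ j, x j ∈ S) (hX : ∀ j, X j ⊆ A) (hY : ∀ j, Y j ⊆ A)
    (hpx : ∀ j, Linked G (X j) p (x j)) (hqx : ∀ j, Linked G (Y j) q (x j))
    (hdisj : ∀ j l, j ≠ l → Disjoint (X j) (Y l)) : False := by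
  have hother : ∀ j : Fin 3, ∃ l, l ≠ j := by decide
  have hxA : ∀ j, x j ∈ A := fun j => hX j (hpx j).right_mem
  have hxX : ∀ j l, l ≠ j → x l ∉ X j := fun j l hlj =>
    disjoint_right.1 (hdisj j l hlj.symm) (hqx l).right_mem
  have hxY : ∀ j l, l ≠ j → x l ∉ Y j := fun j l hlj =>
    disjoint_left.1 (hdisj l j hlj) (hpx l).right_mem
  have hp : ∀ j, p ≠ x j := fun j =>
    let ⟨l, hl⟩ := hother j; (hdisj l j hl).ne_of_mem (hpx l).left_mem (hqx j).right_mem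
  have hq : ∀ j, q ≠ x j := fun j =>
    let ⟨l, hl⟩ := hother j; ((hdisj j l hl.symm).ne_of_mem (hpx j).right_mem (hqx l).left_mem).symm
  refine not_completeBipartiteGraph_three_three_drawing ![D.apex, D.pos p, D.pos q]
    (fun j => D.pos (x j))
    ![fun j => D.spoke (x j), fun j => D.region (X j), fun j => D.region (Y j)] ?_ ?_
  · intro i j
    fin_cases i
    · exact D.spoke_joined (hxA j) (hx j)
    · exact D.joinedIn_region (hX j) (hpx j) (hp j)
    · exact D.joinedIn_region (hY j) (hqx j) (hq j)
  · intro i j k l hik hjl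
    fin_cases i <;> fin_cases k <;> first | exact absurd rfl hik | skip
    · exact D.disjoint_spoke_region (hxA j) (hx j) (hX l) (hxX l j hjl)
    · exact D.disjoint_spoke_region (hxA j) (hx j) (hY l) (hxY l j hjl)
    · exact (D.disjoint_spoke_region (hxA l) (hx l) (hX j) (hxX j l hjl.symm)).symm
    · exact D.disjoint_region (hX j) (hY l) (hdisj j l hjl)
    · exact (D.disjoint_spoke_region (hxA l) (hx l) (hY j) (hxY j l hjl.symm)).symm
    · exact D.disjoint_region (hY j) (hX l) (hdisj l j hjl.symm).symm

/-- The drawing of a smaller induced subgraph, keeping only some of the spokes. -/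
def restrict (D : ApexDrawing A G S) (hB : B ⊆ A) (hT : ∀ v ∈ B, v ∈ T → v ∈ S) :
    ApexDrawing B G T where
  pos := D.pos
  apex := D.apex
  arc := D.arc
  spoke := D.spoke
  arc_joined hu hv := D.arc_joined (hB hu) (hB hv)
  spoke_joined hs hsT := D.spoke_joined (hB hs) (hT _ hs hsT)
  arc_disjoint hu hv hx hy := D.arc_disjoint (hB hu) (hB hv) (hB hx) (hB hy)
  spoke_disjoint hs hsT hu hv := D.spoke_disjoint (hB hs) (hT _ hs hsT) (hB hu) (hB hv)

/-- Deleting the vertices `W ⊆ S`: each of their remaining neighbors becomes visible from the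
apex, along a spoke of `W` followed by an edge. -/
def deleteBoundary [DecidableEq V] (D : ApexDrawing A G S) {W : Finset V} (hWA : W ⊆ A)
    (hWS : ∀ w ∈ W, w ∈ S) :
    ApexDrawing (A \ W) G (S ∪ {x | ∃ w ∈ W, G.Adj w x}) where
  pos := D.pos
  apex := D.apex
  arc := D.arc
  spoke x := {z | (x ∈ S ∧ z ∈ D.spoke x) ∨
    ∃ w ∈ W, G.Adj w x ∧ (z ∈ D.spoke w ∨ z ∈ D.arc w x)}
  arc_joined hu hv := D.arc_joined (Finset.sdiff_subset hu) (Finset.sdiff_subset hv)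
  spoke_joined := by
    rintro x hxA (hxS | ⟨w, hw, hwx⟩)
    · exact (D.spoke_joined (Finset.sdiff_subset hxA) hxS).mono fun z hz => .inl ⟨hxS, hz⟩
    · exact ((D.spoke_joined (hWA hw) (hWS w hw)).mono
        fun z hz => .inr ⟨w, hw, hwx, .inl hz⟩).trans
          ((D.arc_joined (hWA hw) (Finset.sdiff_subset hxA) hwx).mono
            fun z hz => .inr ⟨w, hw, hwx, .inr hz⟩)
  arc_disjoint hu hv hx hy := D.arc_disjoint (Finset.sdiff_subset hu) (Finset.sdiff_subset hv)
    (Finset.sdiff_subset hx) (Finset.sdiff_subset hy)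
  spoke_disjoint := by
    intro x u v hxA _ hu hv huv hxu hxv
    have hxA := Finset.sdiff_subset hxA
    obtain ⟨huA, huW⟩ := Finset.mem_sdiff.1 hu
    obtain ⟨hvA, hvW⟩ := Finset.mem_sdiff.1 hv
    rw [Set.disjoint_left]
    rintro z (⟨hxS, hz⟩ | ⟨w, hw, hwx, hz⟩)
    · exact Set.disjoint_left.1 (D.spoke_disjoint hxA hxS huA hvA huv hxu hxv) hz
    · have hwu : w ≠ u := fun h => huW (h ▸ hw)
      have hwv : w ≠ v := fun h => hvW (h ▸ hw)
      rcases hz with hz | hz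
      · exact Set.disjoint_left.1
          (D.spoke_disjoint (hWA hw) (hWS w hw) huA hvA huv hwu hwv) hz
      · exact Set.disjoint_left.1
          (D.arc_disjoint (hWA hw) hxA huA hvA hwx huv hwu hwv hxu hxv) hz

/-- Deleting a vertex and using it as the new apex. -/
def refocus [DecidableEq V] (D : ApexDrawing A G S) {v : V} (hv : v ∈ A) :
    ApexDrawing (A.erase v) G {x | G.Adj v x} where
  pos := D.pos
  apex := D.pos v
  arc := D.arc
  spoke := D.arc v
  arc_joined hu hw := D.arc_joined (Finset.mem_of_mem_erase hu) (Finset.mem_of_mem_erase hw)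
  spoke_joined hs := D.arc_joined hv (Finset.mem_of_mem_erase hs)
  arc_disjoint hu hw hx hy := D.arc_disjoint (Finset.mem_of_mem_erase hu)
    (Finset.mem_of_mem_erase hw) (Finset.mem_of_mem_erase hx) (Finset.mem_of_mem_erase hy)
  spoke_disjoint hs hvs hu hw huw := D.arc_disjoint hv (Finset.mem_of_mem_erase hs)
    (Finset.mem_of_mem_erase hu) (Finset.mem_of_mem_erase hw) hvs huw
    (Finset.ne_of_mem_erase hu).symm (Finset.ne_of_mem_erase hw).symm

end ApexDrawing

theorem joinedIn_compl_closedBall {E : Type*} [NormedAddCommGroup E] [NormedSpace ℝ E]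
    (hrank : 1 < Module.rank ℝ E) {R : ℝ} {a b : E} (ha : a ∉ Metric.closedBall 0 R)
    (hb : b ∉ Metric.closedBall 0 R) : JoinedIn (Metric.closedBall (0 : E) R)ᶜ a b := by
  rcases lt_or_ge R 0 with hR | hR
  · rw [Metric.closedBall_eq_empty.2 hR, compl_empty]
    exact isPathConnected_univ.joinedIn a trivial b trivial
  have hpolar : (Metric.closedBall (0 : E) R)ᶜ =
      (fun q : ℝ × E => q.1 • q.2) '' (Ioi R ×ˢ Metric.sphere (0 : E) 1) := by
    ext x
    simp only [mem_compl_iff, mem_closedBall_zero_iff, not_le, mem_image, mem_prod, mem_Ioi,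
      mem_sphere_zero_iff_norm, Prod.exists]
    refine ⟨fun hx => ⟨‖x‖, ‖x‖⁻¹ • x, ⟨hx, ?_⟩, ?_⟩, ?_⟩
    · rw [norm_smul, norm_inv, norm_norm, inv_mul_cancel₀ (hR.trans_lt hx).ne']
    · rw [smul_inv_smul₀ (hR.trans_lt hx).ne']
    · rintro ⟨t, y, ⟨ht, hy⟩, rfl⟩
      rw [norm_smul, hy, mul_one]
      exact ht.trans_le (le_abs_self t)
  rw [hpolar]
  exact ((((convex_Ioi R).isPathConnected nonempty_Ioi).prod
    (isPathConnected_sphere hrank (0 : E) zero_le_one)).image (by fun_prop)).joinedIn a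
      (hpolar ▸ ha) b (hpolar ▸ hb)

namespace PlaneGraph

variable {V : Type u} (G : PlaneGraph V)

theorem isCompact_arc {u v : V} (h : G.Adj u v) : IsCompact (G.arc s(u, v)) := by
  obtain ⟨f, hf, -, himage, -⟩ := G.arc_arc u v h
  exact himage ▸ isCompact_Icc.image_of_continuousOn hf

theorem joinedIn_arc {u v : V} (h : G.Adj u v) :
    JoinedIn (G.arc s(u, v)) (G.pos u) (G.pos v) := by
  obtain ⟨f, hf, -, himage, h0, h1⟩ := G.arc_arc u v h
  exact JoinedIn.ofLine hf h0 h1 himage.le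

theorem isCompact_iUnion_arc (P : V → V → Prop) :
    IsCompact (⋃ (u : V) (v : V) (_ : G.Adj u v ∧ P u v), G.arc s(u, v)) := by
  have hfinite : {e : V × V | G.Adj e.1 e.2 ∧ P e.1 e.2}.Finite :=
    (G.finite_verts.prod G.finite_verts).subset fun e he =>
      ⟨G.adj_mem _ _ he.1, G.adj_mem _ _ (G.adj_symm _ _ he.1)⟩
  convert hfinite.isCompact_biUnion (f := fun e : V × V => G.arc s(e.1, e.2))
    (fun e he => G.isCompact_arc he.1) using 1
  ext z
  simp only [mem_iUnion, mem_ofPred_eq, exists_prop, Prod.exists]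

theorem isCompact_image : IsCompact G.image :=
  (G.finite_verts.image _).isCompact.union
    (by simpa using G.isCompact_iUnion_arc fun _ _ => True)

theorem arc_subset_image {u v : V} (h : G.Adj u v) : G.arc s(u, v) ⊆ G.image := fun _ hz =>
  .inr (mem_iUnion.2 ⟨u, mem_iUnion.2 ⟨v, mem_iUnion.2 ⟨h, hz⟩⟩⟩)

theorem exists_joinedIn_compl_image_of_mem_outerFace {a : ℝ × ℝ} (ha : a ∈ G.outerFace) (R : ℝ) :
    ∃ b ∉ Metric.closedBall 0 R, JoinedIn G.imageᶜ a b := by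
  obtain ⟨haG, hunbounded⟩ := ha
  have hopen : IsOpen G.imageᶜ := G.isCompact_image.isClosed.isOpen_compl
  have hpath : IsPathConnected (connectedComponentIn G.imageᶜ a) :=
    hopen.connectedComponentIn.isConnected_iff_isPathConnected.1
      (isConnected_connectedComponentIn_iff.2 haG)
  have hfar : ¬ connectedComponentIn G.imageᶜ a ⊆ Metric.closedBall 0 R := fun h =>
    hunbounded (Metric.isBounded_closedBall.subset h)
  obtain ⟨b, hb, hbR⟩ := not_subset.1 hfar
  exact ⟨b, hbR, (hpath.joinedIn a (mem_connectedComponentIn haG) b hb).mono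
    (connectedComponentIn_subset _ _)⟩

theorem joinedIn_compl_image_of_mem_outerFace {a b : ℝ × ℝ} (ha : a ∈ G.outerFace)
    (hb : b ∈ G.outerFace) : JoinedIn G.imageᶜ a b := by
  obtain ⟨R, hR⟩ := G.isCompact_image.isBounded.subset_closedBall (0 : ℝ × ℝ)
  obtain ⟨a', ha', haa'⟩ := G.exists_joinedIn_compl_image_of_mem_outerFace ha R
  obtain ⟨b', hb', hbb'⟩ := G.exists_joinedIn_compl_image_of_mem_outerFace hb R
  have hrank : 1 < Module.rank ℝ (ℝ × ℝ) := by
    simp only [rank_prod', Module.rank_self]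
    norm_num
  exact haa'.trans (((joinedIn_compl_closedBall hrank ha' hb').mono
    (compl_subset_compl.2 hR)).trans hbb'.symm)

theorem exists_spoke {o : ℝ × ℝ} (ho : o ∈ G.outerFace) {s : V} (hs : s ∈ G.boundaryVerts) :
    ∃ F, JoinedIn F o (G.pos s) ∧
      ∀ u v, G.Adj u v → s ≠ u → s ≠ v → Disjoint F (G.arc s(u, v)) := by
  let K := ⋃ (u : V) (v : V) (_ : G.Adj u v ∧ s ≠ u ∧ s ≠ v), G.arc s(u, v)
  have hsK : G.pos s ∈ Kᶜ := by
    simp only [K, mem_compl_iff, mem_iUnion, not_exists]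
    rintro u v ⟨huv, hsu, hsv⟩ hmem
    exact (G.arc_avoid u v huv s hs.1 hmem).elim hsu hsv
  obtain ⟨ε, hε, hball⟩ :=
    Metric.isOpen_iff.1 (G.isCompact_iUnion_arc _).isClosed.isOpen_compl _ hsK
  obtain ⟨z, hz, hsz⟩ := Metric.mem_closure_iff.1 (frontier_subset_closure hs.2) ε hε
  refine ⟨G.imageᶜ ∪ Metric.ball (G.pos s) ε, ?_, fun u v huv hsu hsv => ?_⟩
  · exact ((G.joinedIn_compl_image_of_mem_outerFace ho hz).mono subset_union_left).trans
      (((Metric.isPathConnected_ball hε).joinedIn z (Metric.mem_ball'.2 hsz) _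
        (Metric.mem_ball_self hε)).mono subset_union_right)
  · refine disjoint_union_left.2 ⟨disjoint_left.2 fun x hx hxa => hx (G.arc_subset_image huv hxa),
      disjoint_left.2 fun x hx hxa => hball hx ?_⟩
    exact mem_iUnion.2 ⟨u, mem_iUnion.2 ⟨v, mem_iUnion.2 ⟨⟨huv, hsu, hsv⟩, hxa⟩⟩⟩

theorem disjoint_arc {u v x y : V} (huv : G.Adj u v) (hxy : G.Adj x y) (hux : u ≠ x) (huy : u ≠ y)
    (hvx : v ≠ x) (hvy : v ≠ y) : Disjoint (G.arc s(u, v)) (G.arc s(x, y)) := by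
  have hne : s(u, v) ≠ s(x, y) := fun h =>
    (Sym2.eq_iff.1 h).elim (fun h => hux h.1) fun h => huy h.1
  rw [disjoint_left]
  intro z hz hz'
  obtain ⟨w, ⟨rfl | rfl, rfl | rfl⟩, -⟩ := G.arc_meet u v x y huv hxy hne ⟨hz, hz'⟩ <;>
    contradiction

/-- The abstract graph underlying a plane graph. -/
def toSimpleGraph : SimpleGraph V where
  Adj := G.Adj
  symm := ⟨G.adj_symm⟩
  loopless := ⟨G.adj_irrefl⟩

/- The apex is placed in the outer face. -/
theorem nonempty_apexDrawing (houter : G.outerFace.Nonempty) :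
    Nonempty (ApexDrawing G.finite_verts.toFinset G.toSimpleGraph {v | G.OnOuter v}) := by
  classical
  obtain ⟨o, ho⟩ := houter
  have hspoke : ∀ s, ∃ F, s ∈ G.boundaryVerts → JoinedIn F o (G.pos s) ∧
      ∀ u v, G.Adj u v → s ≠ u → s ≠ v → Disjoint F (G.arc s(u, v)) := fun s => by
    by_cases hs : s ∈ G.boundaryVerts
    · obtain ⟨F, hF⟩ := G.exists_spoke ho hs
      exact ⟨F, fun _ => hF⟩
    · exact ⟨∅, fun h => absurd h hs⟩
  choose spoke hspoke using hspoke
  let e := Complex.equivRealProdCLM.symm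
  have hboundary : ∀ {s}, s ∈ G.finite_verts.toFinset → s ∈ {v | G.OnOuter v} →
      s ∈ G.boundaryVerts := fun hs hs' => ⟨G.finite_verts.mem_toFinset.1 hs, hs'⟩
  exact ⟨{
    pos := fun v => e (G.pos v)
    apex := e o
    arc := fun u v => e '' G.arc s(u, v)
    spoke := fun s => e '' spoke s
    arc_joined := fun _ _ huv => (G.joinedIn_arc huv).map e.continuous
    spoke_joined := fun hs hs' => (hspoke _ (hboundary hs hs')).1.map e.continuous
    arc_disjoint := fun _ _ _ _ huv hxy hux huy hvx hvy =>
      (disjoint_image_iff e.injective).2 (G.disjoint_arc huv hxy hux huy hvx hvy)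
    spoke_disjoint := fun hs hs' _ _ huv hsu hsv =>
      (disjoint_image_iff e.injective).2 ((hspoke _ (hboundary hs hs')).2 _ _ huv hsu hsv) }⟩

variable {G} in
theorem OnOuter.outerFace_nonempty {v : V} (hv : G.OnOuter v) : G.outerFace.Nonempty :=
  closure_nonempty_iff.1 ⟨_, frontier_subset_closure hv⟩

variable {G} in
theorem IsOuterCycle.mem_boundaryVerts {C : List V} (hC : G.IsOuterCycle C) {v : V} (hv : v ∈ C) :
    v ∈ G.boundaryVerts :=
  ⟨hC.2.2.1 v hv, hC.2.2.2.2.ge (.inl (mem_image_of_mem _ hv))⟩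

end PlaneGraph

/-- `uv` is an edge of `G` with both ends among the vertices `S` of `A` seen from the apex. -/
structure BoundaryEdge {V : Type*} (A : Finset V) (G : SimpleGraph V) (S : Set V) (u v : V) :
    Prop where
  left_mem : u ∈ A
  right_mem : v ∈ A
  left_mem_boundary : u ∈ S
  right_mem_boundary : v ∈ S
  adj : G.Adj u v

namespace BoundaryEdge

variable {V : Type*} {A : Finset V} {G : SimpleGraph V} {S : Set V} {u v : V}

theorem symm (h : BoundaryEdge A G S u v) : BoundaryEdge A G S v u :=
  ⟨h.right_mem, h.left_mem, h.right_mem_boundary, h.left_mem_boundary, h.adj.symm⟩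

theorem linked (h : BoundaryEdge A G S u v) : Linked G {u, v} u v :=
  .of_adj h.adj (by simp) (by simp)

theorem mono (h : BoundaryEdge A G S u v) {B : Finset V} {T : Set V} (hu : u ∈ B) (hv : v ∈ B)
    (hST : S ⊆ T) : BoundaryEdge B G T u v :=
  ⟨hu, hv, hST h.left_mem_boundary, hST h.right_mem_boundary, h.adj⟩

theorem pair_subset (h : BoundaryEdge A G S u v) : ({u, v} : Set V) ⊆ A :=
  pair_subset_iff.2 ⟨h.left_mem, h.right_mem⟩

end BoundaryEdge

/-- `A` is the union of two proper subsets that share exactly the two ends of the boundary edge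
`uv`, with no edge of `G` leading from one side to the other. -/
structure EdgeSeparation {V : Type*} [DecidableEq V] (A : Finset V) (G : SimpleGraph V)
    (S : Set V) (u v : V) (A₁ A₂ : Finset V) : Prop where
  edge : BoundaryEdge A G S u v
  union_eq : A₁ ∪ A₂ = A
  inter_eq : A₁ ∩ A₂ = {u, v}
  left_ssubset : A₁ ⊂ A
  right_ssubset : A₂ ⊂ A
  adj_mem : ∀ {x y}, x ∈ A → y ∈ A → G.Adj x y → (x ∈ A₁ ∧ y ∈ A₁) ∨ (x ∈ A₂ ∧ y ∈ A₂)

/-- `A` has no separation along a boundary edge. -/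
def Unseparated {V : Type*} [DecidableEq V] (A : Finset V) (G : SimpleGraph V) (S : Set V) :
    Prop :=
  ∀ u v A₁ A₂, ¬ EdgeSeparation A G S u v A₁ A₂

/-- `w 0, …, w (m - 1)` is a path of `G` through vertices of `A` seen from the apex. -/
structure BoundaryPath {V : Type*} (A : Finset V) (G : SimpleGraph V) (S : Set V) (w : ℕ → V)
    (m : ℕ) : Prop where
  mem : ∀ {i}, i < m → w i ∈ A
  mem_boundary : ∀ {i}, i < m → w i ∈ S
  injOn : Set.InjOn w (Set.Iio m)
  adj : ∀ {i}, i + 1 < m → G.Adj (w i) (w (i + 1))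

/-- `w 0, …, w (n - 1)` is a cycle of `G` through vertices of `A` seen from the apex; `w` is
extended to all indices with period `n`. -/
structure BoundaryCycle {V : Type*} (A : Finset V) (G : SimpleGraph V) (S : Set V) (w : ℕ → V)
    (n : ℕ) : Prop where
  three_le : 3 ≤ n
  edge : ∀ i, BoundaryEdge A G S (w i) (w (i + 1))
  eq_iff : ∀ {i j}, w i = w j ↔ i ≡ j [MOD n]

section BoundaryStructure

variable {V : Type*} {A : Finset V} {G : SimpleGraph V} {S : Set V}

section Separation

variable [DecidableEq V]

namespace EdgeSeparation

variable {u v x : V} {A₁ A₂ : Finset V}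

theorem symm (h : EdgeSeparation A G S u v A₁ A₂) : EdgeSeparation A G S u v A₂ A₁ where
  edge := h.edge
  union_eq := by rw [Finset.union_comm, h.union_eq]
  inter_eq := by rw [Finset.inter_comm, h.inter_eq]
  left_ssubset := h.right_ssubset
  right_ssubset := h.left_ssubset
  adj_mem hx hy hxy := (h.adj_mem hx hy hxy).symm

theorem mem_or_mem (h : EdgeSeparation A G S u v A₁ A₂) (hx : x ∈ A) : x ∈ A₁ ∨ x ∈ A₂ :=
  Finset.mem_union.1 (h.union_eq ▸ hx)

theorem eq_or_eq (h : EdgeSeparation A G S u v A₁ A₂) (h₁ : x ∈ A₁) (h₂ : x ∈ A₂) :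
    x = u ∨ x = v := by
  simpa [h.inter_eq] using Finset.mem_inter.2 ⟨h₁, h₂⟩

theorem edge_left (h : EdgeSeparation A G S u v A₁ A₂) : BoundaryEdge A₁ G S u v := by
  have hmem : ∀ x ∈ ({u, v} : Finset V), x ∈ A₁ := fun x hx =>
    (Finset.mem_inter.1 (h.inter_eq ▸ hx)).1
  exact h.edge.mono (hmem u (by simp)) (hmem v (by simp)) subset_rfl

end EdgeSeparation

theorem not_unseparated :
    ¬ Unseparated A G S ↔ ∃ u v A₁ A₂, EdgeSeparation A G S u v A₁ A₂ := by
  simp only [Unseparated, not_forall, not_not]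

theorem Unseparated.linked (hN : Unseparated A G S) {u v a b : V} (he : BoundaryEdge A G S u v)
    (ha : a ∈ (A \ {u, v} : Set V)) (hb : b ∈ (A \ {u, v} : Set V)) :
    Linked G (A \ {u, v}) a b := by
  classical
  by_contra hab
  have haa := Linked.refl (G := G) ha
  let A₁ := A.filter fun x => x ∈ ({u, v} : Set V) ∨ Linked G (A \ {u, v}) a x
  let A₂ := A.filter fun x => ¬ Linked G (A \ {u, v}) a x
  have hmem₁ : ∀ {x}, x ∈ A₁ ↔ x ∈ A ∧ (x ∈ ({u, v} : Set V) ∨ Linked G (A \ {u, v}) a x) :=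
    Finset.mem_filter
  have hmem₂ : ∀ {x}, x ∈ A₂ ↔ x ∈ A ∧ ¬ Linked G (A \ {u, v}) a x := Finset.mem_filter
  have hcut : ∀ {x}, x ∈ ({u, v} : Set V) → ¬ Linked G (A \ {u, v}) a x :=
    fun hx h => h.right_mem.2 hx
  have hclosed : ∀ {x y}, y ∈ A → G.Adj x y → Linked G (A \ {u, v}) a x →
      y ∈ A₁ := fun {x y} hy hxy hx => hmem₁.2 ⟨hy, or_iff_not_imp_left.2 fun hyc =>
    hx.trans (.of_adj hxy hx.right_mem ⟨hy, hyc⟩)⟩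
  refine hN u v A₁ A₂ ⟨he, ?_, ?_, ?_, ?_, fun {x y} hx hy hxy => ?_⟩
  · ext x
    rw [Finset.mem_union, hmem₁, hmem₂]
    tauto
  · ext x
    rw [Finset.mem_inter, hmem₁, hmem₂, ← Finset.mem_coe (s := {u, v}), Finset.coe_pair]
    exact ⟨fun ⟨h₁, h₂⟩ => h₁.2.resolve_right h₂.2, fun hx =>
      ⟨⟨he.pair_subset hx, .inl hx⟩, he.pair_subset hx, hcut hx⟩⟩
  · exact Finset.filter_ssubset.2 ⟨b, hb.1, not_or.2 ⟨hb.2, hab⟩⟩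
  · exact Finset.filter_ssubset.2 ⟨a, ha.1, not_not.2 haa⟩
  · by_cases hx' : Linked G (A \ {u, v}) a x
    · exact .inl ⟨hmem₁.2 ⟨hx, .inr hx'⟩, hclosed hy hxy hx'⟩
    · by_cases hy' : Linked G (A \ {u, v}) a y
      · exact .inl ⟨hclosed hx hxy.symm hy', hmem₁.2 ⟨hy, .inr hy'⟩⟩
      · exact .inr ⟨hmem₂.2 ⟨hx, hx'⟩, hmem₂.2 ⟨hy, hy'⟩⟩

theorem Unseparated.boundaryEdge_eq_or_eq_or_eq (hN : Unseparated A G S) (D : ApexDrawing A G S)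
    {s a b c : V} (ha : BoundaryEdge A G S s a) (hb : BoundaryEdge A G S s b)
    (hc : BoundaryEdge A G S s c) : a = b ∨ a = c ∨ b = c := by
  by_contra! hne
  obtain ⟨hab, hac, hbc⟩ := hne
  have hmem : ∀ {x y}, BoundaryEdge A G S s x → x ≠ y → x ∈ (A \ {s, y} : Set V) :=
    fun hx hxy => ⟨hx.right_mem, by simp [hx.adj.ne', hxy]⟩
  exact D.not_pairwise_linked_four ha.left_mem_boundary ha.right_mem_boundary
    hb.right_mem_boundary hc.right_mem_boundary ha.pair_subset hb.pair_subset hc.pair_subset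
    sdiff_subset sdiff_subset sdiff_subset ha.linked hb.linked hc.linked
    (hN.linked hc (hmem ha hac) (hmem hb hbc))
    (hN.linked hb (hmem ha hab) (hmem hc hbc.symm))
    (hN.linked ha (hmem hb hab.symm) (hmem hc hac.symm))
    disjoint_sdiff_right disjoint_sdiff_right disjoint_sdiff_right

end Separation

namespace BoundaryCycle

variable {w : ℕ → V} {n : ℕ} {r : V}

theorem mem (h : BoundaryCycle A G S w n) (i : ℕ) : w i ∈ A := (h.edge i).left_mem

theorem mem_boundary (h : BoundaryCycle A G S w n) (i : ℕ) : w i ∈ S :=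
  (h.edge i).left_mem_boundary

theorem rotate (h : BoundaryCycle A G S w n) (l : ℕ) :
    BoundaryCycle A G S (fun i => w (l + i)) n where
  three_le := h.three_le
  edge i := h.edge (l + i)
  eq_iff := h.eq_iff.trans ⟨Nat.ModEq.add_left_cancel' l, Nat.ModEq.add_left l⟩

theorem range_rotate (h : BoundaryCycle A G S w n) (l : ℕ) :
    range (fun i => w (l + i)) = range w := by
  refine Subset.antisymm (range_subset_iff.2 fun i => mem_range_self _) (range_subset_iff.2 ?_)
  refine fun i => ⟨(n - 1) * l + i, h.eq_iff.2 ?_⟩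
  have hn : 1 ≤ n := by have := h.three_le; omega
  have hsum : l + ((n - 1) * l + i) = i + n * l := by
    obtain ⟨n, rfl⟩ := Nat.exists_eq_add_of_le' hn
    simp only [Nat.add_sub_cancel]
    ring
  rw [hsum]
  simp [Nat.ModEq]

theorem disjoint_image (h : BoundaryCycle A G S w n) {s t : Set ℕ} (hs : s ⊆ Iio n)
    (ht : t ⊆ Iio n) (hst : Disjoint s t) : Disjoint (w '' s) (w '' t) := by
  rw [disjoint_left]
  rintro _ ⟨i, hi, rfl⟩ ⟨j, hj, hij⟩
  exact hst.ne_of_mem hi hj ((h.eq_iff.1 hij).eq_of_lt_of_lt (ht hj) (hs hi)).symm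

theorem image_subset (h : BoundaryCycle A G S w n) (s : Set ℕ) : w '' s ⊆ A :=
  image_subset_iff.2 fun i _ => h.mem i

theorem linked_segment (h : BoundaryCycle A G S w n) {i j : ℕ} (hij : i ≤ j) :
    Linked G (w '' Icc i j) (w i) (w j) := by
  induction j, hij using Nat.le_induction with
  | base => exact .refl ⟨i, by simp, rfl⟩
  | succ j hij ih =>
    exact (ih.mono (image_mono (Icc_subset_Icc_right j.le_succ))).trans
      (.of_adj (h.edge j).adj ⟨j, by simp [hij], rfl⟩ ⟨j + 1, by simp; omega, rfl⟩)

theorem adj_last (h : BoundaryCycle A G S w n) : G.Adj (w 0) (w (n - 1)) := by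
  have hlast : w (n - 1 + 1) = w 0 :=
    h.eq_iff.2 (by simp [Nat.ModEq, Nat.sub_add_cancel (show 1 ≤ n by have := h.three_le; omega)])
  exact hlast ▸ (h.edge (n - 1)).adj.symm

theorem linked_first (h : BoundaryCycle A G S w n) : Linked G (w '' {0, 1}) (w 0) (w 1) :=
  .of_adj (h.edge 0).adj (mem_image_of_mem _ (by simp)) (mem_image_of_mem _ (by simp))

theorem linked_last (h : BoundaryCycle A G S w n) :
    Linked G (w '' {0, n - 1}) (w 0) (w (n - 1)) :=
  .of_adj h.adj_last (mem_image_of_mem _ (by simp)) (mem_image_of_mem _ (by simp))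

/-- The vertices available to a walk that meets the cycle `w` only in its end `w l`. -/
def fan (A : Finset V) (w : ℕ → V) (l : ℕ) : Set V := insert (w l) (A \ range w)

theorem fan_subset (h : BoundaryCycle A G S w n) (l : ℕ) : fan A w l ⊆ A :=
  insert_subset (h.mem l) sdiff_subset

theorem disjoint_fan (h : BoundaryCycle A G S w n) {l : ℕ} {t : Set ℕ} (hl : l < n)
    (ht : t ⊆ Iio n) (hlt : l ∉ t) : Disjoint (fan A w l) (w '' t) := by
  rw [fan, ← singleton_union, disjoint_union_left, ← image_singleton]
  exact ⟨h.disjoint_image (singleton_subset_iff.2 hl) ht (disjoint_singleton_left.2 hlt),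
    (disjoint_sdiff_left).mono_right (image_subset_range w t)⟩

theorem exists_linked_fan [DecidableEq V] (h : BoundaryCycle A G S w n)
    (hN : Unseparated A G S) (hr : r ∈ A) (hrw : r ∉ range w) (i : ℕ) :
    ∃ k, 2 ≤ k ∧ k < n ∧ Linked G (fan A w (i + k)) r (w (i + k)) := by
  have h3 := h.three_le
  have hne : ∀ j < n, ∀ k < n, w (i + j) = w (i + k) → j = k := fun j hj k hk hjk =>
    ((h.rotate i).eq_iff.1 hjk).eq_of_lt_of_lt hj hk
  have hlink := hN.linked (h.edge i) (a := r) (b := w (i + 2))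
    ⟨hr, fun hmem => hmem.elim (fun h => hrw ⟨i, h.symm⟩) fun h => hrw ⟨i + 1, h.symm⟩⟩
    ⟨h.mem _, fun hmem => hmem.elim
      (fun h => absurd (hne 2 (by omega) 0 (by omega) h) (by decide))
      fun h => absurd (hne 2 (by omega) 1 (by omega) h) (by decide)⟩
  obtain ⟨_, ⟨j, rfl⟩, hjA, hj⟩ := hlink.exists_first_hit (mem_range_self _)
  obtain ⟨k, hk⟩ : w j ∈ range fun k => w (i + k) := h.range_rotate i ▸ mem_range_self j
  have hkn : w (i + k % n) = w j := by
    rw [← hk]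
    exact (h.rotate i).eq_iff.2 (Nat.mod_modEq k n)
  rw [← hkn] at hj hjA
  refine ⟨k % n, ?_, Nat.mod_lt _ (by omega), hj.mono ?_⟩
  · by_contra! hlt
    refine hjA.2 ?_
    interval_cases k % n <;> simp
  · exact insert_subset_insert (sdiff_subset_sdiff_left sdiff_subset)

theorem not_linked_fan_opposite (h : BoundaryCycle A G S w n) (D : ApexDrawing A G S)
    (hrS : r ∈ S) (h0 : Linked G (fan A w 0) r (w 0)) {k : ℕ} (hk : 2 ≤ k) (hkn : k + 2 ≤ n) :
    ¬ Linked G (fan A w k) r (w k) := fun hk' => by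
  have hmem : ∀ {i j}, i ≤ j → j < n → Icc i j ⊆ Iio n := fun _ hj _ hx =>
    hx.2.trans_lt hj
  have hpair : ∀ {i}, i < n → ({0, i} : Set ℕ) ⊆ Iio n := fun hi =>
    pair_subset_iff.2 ⟨(zero_le).trans_lt hi, hi⟩
  have hleft : Icc 1 k ⊆ Iio n := hmem (by omega) (by omega)
  have hright : Icc k (n - 1) ⊆ Iio n := hmem (by omega) (by omega)
  refine D.not_linked_two_three (p := w 0) (q := w k) (x := ![w 1, w (n - 1), r])
    (X := ![w '' {0, 1}, w '' {0, n - 1}, fan A w 0])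
    (Y := ![w '' Icc 1 k, w '' Icc k (n - 1), fan A w k]) ?_ ?_ ?_ ?_ ?_ ?_
  · simp [Fin.forall_fin_succ, h.mem_boundary, hrS]
  · simp [Fin.forall_fin_succ, h.image_subset, h.fan_subset]
  · simp [Fin.forall_fin_succ, h.image_subset, h.fan_subset]
  · simp [Fin.forall_fin_succ, h.linked_first, h.linked_last, h0.symm]
  · simp [Fin.forall_fin_succ, (h.linked_segment (show 1 ≤ k by omega)).symm,
      h.linked_segment (show k ≤ n - 1 by omega), hk'.symm]
  · intro i j hij
    fin_cases i <;> fin_cases j <;> first | exact absurd rfl hij | skip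
    · refine h.disjoint_image (hpair (by omega)) hright ?_
      simp; omega
    · exact (h.disjoint_fan (by omega) (hpair (by omega)) (by simp; omega)).symm
    · refine h.disjoint_image (hpair (by omega)) hleft ?_
      simp; omega
    · exact (h.disjoint_fan (by omega) (hpair (by omega)) (by simp; omega)).symm
    · exact h.disjoint_fan (by omega) hleft (by simp)
    · exact h.disjoint_fan (by omega) hright (by simp; omega)

theorem not_linked_fan_consecutive (h : BoundaryCycle A G S w n) (D : ApexDrawing A G S)
    (hrS : r ∈ S) (h0 : Linked G (fan A w 0) r (w 0)) (h1 : Linked G (fan A w 1) r (w 1)) :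
    ¬ Linked G (fan A w (n - 1)) r (w (n - 1)) := fun hlast => by
  have h3 := h.three_le
  have hpair : ∀ {i}, i < n → ({0, i} : Set ℕ) ⊆ Iio n := fun hi =>
    pair_subset_iff.2 ⟨(zero_le).trans_lt hi, hi⟩
  exact D.not_pairwise_linked_four (h.mem_boundary 0) (h.mem_boundary 1)
    (h.mem_boundary (n - 1)) hrS (h.image_subset _) (h.image_subset _) (h.fan_subset _)
    (h.image_subset _) (h.fan_subset _) (h.fan_subset _) h.linked_first h.linked_last h0.symm
    (h.linked_segment (by omega)) h1.symm hlast.symm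
    (h.disjoint_fan (by omega) (hpair (by omega)) (by simp; omega)).symm
    (h.disjoint_fan (by omega) (hpair (by omega)) (by simp; omega)).symm
    (h.disjoint_fan (by omega) (fun x hx => by simp at hx ⊢; omega) (by simp))

/- Otherwise the walks from `r` to the cycle, the cycle and the apex form a `K₅` or a `K₃,₃`. -/
theorem mem_range_of_linked_fan_zero [DecidableEq V] (h : BoundaryCycle A G S w n)
    (hN : Unseparated A G S) (D : ApexDrawing A G S) (hrA : r ∈ A) (hrS : r ∈ S)
    (h0 : Linked G (fan A w 0) r (w 0)) : r ∈ range w := by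
  by_contra hrw
  have h3 := h.three_le
  obtain ⟨k, hk, hkn, hlink⟩ := h.exists_linked_fan hN hrA hrw 0
  obtain ⟨l, hl, hln, hlink'⟩ := h.exists_linked_fan hN hrA hrw (n - 1)
  have hwrap : w (n - 1 + l) = w (l - 1) := h.eq_iff.2 <| by
    rw [show n - 1 + l = n + (l - 1) by omega]
    exact Nat.add_modEq_left
  rw [zero_add] at hlink
  rw [fan, hwrap] at hlink'
  by_cases hkn' : k + 2 ≤ n
  · exact h.not_linked_fan_opposite D hrS h0 hk hkn' hlink
  by_cases hl' : 3 ≤ l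
  · exact h.not_linked_fan_opposite D hrS h0 (k := l - 1) (by omega) (by omega) hlink'
  obtain rfl : k = n - 1 := by omega
  obtain rfl : l = 2 := by omega
  exact h.not_linked_fan_consecutive D hrS h0 hlink' hlink

theorem mem_range [DecidableEq V] (h : BoundaryCycle A G S w n) (hN : Unseparated A G S)
    (D : ApexDrawing A G S) (hrA : r ∈ A) (hrS : r ∈ S) : r ∈ range w := by
  by_contra hrw
  obtain ⟨l, -, -, hl⟩ := h.exists_linked_fan hN hrA hrw 0
  rw [fan, ← h.range_rotate (0 + l)] at hl
  exact hrw (h.range_rotate (0 + l) ▸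
    (h.rotate (0 + l)).mem_range_of_linked_fan_zero hN D hrA hrS hl)

end BoundaryCycle

namespace BoundaryPath

variable {w : ℕ → V} {m : ℕ}

theorem edge (h : BoundaryPath A G S w m) {i : ℕ} (hi : i + 1 < m) :
    BoundaryEdge A G S (w i) (w (i + 1)) :=
  ⟨h.mem (Nat.lt_of_succ_lt hi), h.mem hi, h.mem_boundary (Nat.lt_of_succ_lt hi),
    h.mem_boundary hi, h.adj hi⟩

theorem boundaryCycle (h : BoundaryPath A G S w m) {i j : ℕ} (hij : i + 2 ≤ j) (hj : j < m)
    (hadj : G.Adj (w i) (w j)) :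
    BoundaryCycle A G S (fun k => w (i + k % (j - i + 1))) (j - i + 1) where
  three_le := by omega
  edge k := by
    have hk := Nat.mod_lt k (show j - i + 1 > 0 by omega)
    rw [Nat.add_mod_eq_ite, Nat.mod_eq_of_lt (show 1 < j - i + 1 by omega)]
    split_ifs with hwrap
    · have hback : i + (k % (j - i + 1) + 1 - (j - i + 1)) = i := by omega
      have hlast : i + k % (j - i + 1) = j := by omega
      rw [hback, hlast]
      exact ⟨h.mem hj, h.mem (by omega), h.mem_boundary hj, h.mem_boundary (by omega), hadj.symm⟩
    · exact h.edge (by omega)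
  eq_iff {a b} := by
    have ha := Nat.mod_lt a (show j - i + 1 > 0 by omega)
    have hb := Nat.mod_lt b (show j - i + 1 > 0 by omega)
    refine ⟨fun hab => ?_, fun hab => by rw [hab]⟩
    have := h.injOn (mem_Iio.2 (by omega)) (mem_Iio.2 (by omega)) hab
    exact Nat.add_left_cancel this

/- A chord would close a cycle, but a boundary cycle passes through all of `A ∩ S`. -/
theorem eq_succ_of_adj [DecidableEq V] (h : BoundaryPath A G S w m) (hN : Unseparated A G S)
    (D : ApexDrawing A G S) {r : V} (hrA : r ∈ A) (hrS : r ∈ S) (hrw : ∀ i < m, w i ≠ r)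
    {i j : ℕ} (hij : i < j) (hj : j < m) (hadj : G.Adj (w i) (w j)) : j = i + 1 := by
  by_contra hne
  obtain ⟨k, hk⟩ := (h.boundaryCycle (by omega) hj hadj).mem_range hN D hrA hrS
  have := Nat.mod_lt k (show j - i + 1 > 0 by omega)
  exact hrw _ (by omega) hk

end BoundaryPath

end BoundaryStructure

/-- `φ` properly colors the subgraph of `G` induced on `A`, and takes its colors from the lists `L`
outside the exempt set `R`. -/
structure IsListColoring {V α : Type*} (A : Finset V) (G : SimpleGraph V) (L : V → Finset α)
    (R : Set V) (φ : V → α) : Prop where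
  mem : ∀ {v}, v ∈ A → v ∉ R → φ v ∈ L v
  ne : ∀ {u v}, u ∈ A → v ∈ A → G.Adj u v → φ u ≠ φ v

/-- The list sizes of Thomassen's theorem, with boundary `S` and exempt set `R`. -/
structure ThomassenLists {V α : Type*} (A : Finset V) (S : Set V) (L : V → Finset α)
    (R : Set V) : Prop where
  three_le : ∀ {v}, v ∈ A → v ∉ R → 3 ≤ (L v).card
  five_le : ∀ {v}, v ∈ A → v ∉ R → v ∉ S → 5 ≤ (L v).card

open Classical in
/-- The lists used while `W` is deleted: the colors `K` are kept free for `W` by removing them from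
the lists of the neighbors of `W` outside `S`. -/
noncomputable def reserve {V α : Type*} [DecidableEq α] (G : SimpleGraph V) (S : Set V)
    (L : V → Finset α) (W : Finset V) (K : Finset α) (z : V) : Finset α :=
  if z ∉ S ∧ ∃ w ∈ W, G.Adj w z then L z \ K else L z

section ListColoring

variable {V α : Type*} {A B W A₁ A₂ : Finset V} {G : SimpleGraph V} {S R R' : Set V}
  {L L' : V → Finset α} {φ ψ : V → α} {u v : V} {K : Finset α}

theorem ThomassenLists.mono (h : ThomassenLists A S L R) (hB : B ⊆ A)
    (hR : ∀ v ∈ B, v ∈ R → v ∈ R') : ThomassenLists B S L R' where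
  three_le hv hvR := h.three_le (hB hv) (mt (hR _ hv) hvR)
  five_le hv hvR := h.five_le (hB hv) (mt (hR _ hv) hvR)

section Reserve

variable [DecidableEq α]

theorem reserve_of_mem (hv : v ∈ S) : reserve G S L W K v = L v :=
  if_neg fun h => h.1 hv

theorem reserve_of_adj (hu : u ∈ W) (hadj : G.Adj u v) (hv : v ∉ S) :
    reserve G S L W K v = L v \ K :=
  if_pos ⟨hv, u, hu, hadj⟩

theorem reserve_subset (G : SimpleGraph V) (S : Set V) (L : V → Finset α) (W : Finset V)
    (K : Finset α) (v : V) : reserve G S L W K v ⊆ L v := by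
  unfold reserve
  split_ifs
  · exact Finset.sdiff_subset
  · rfl

theorem ThomassenLists.reserve (h : ThomassenLists A S L R) (W : Finset V) (hK : K.card ≤ 2) :
    ThomassenLists A (S ∪ {x | ∃ w ∈ W, G.Adj w x}) (reserve G S L W K) R where
  three_le {v} hv hvR := by
    unfold _root_.reserve
    split_ifs with hv'
    · have := h.five_le hv hvR hv'.1
      have := Finset.le_card_sdiff K (L v)
      omega
    · exact h.three_le hv hvR
  five_le {v} hv hvR hvS := by
    rw [mem_union, not_or] at hvS
    rw [_root_.reserve, if_neg fun h => hvS.2 h.2]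
    exact h.five_le hv hvR hvS.1

end Reserve

namespace IsListColoring

theorem mono (h : IsListColoring A G L R φ) (hB : B ⊆ A) (hR : ∀ v ∈ B, v ∈ R → v ∈ R')
    (hL : ∀ v ∈ B, v ∉ R' → L v ⊆ L' v) : IsListColoring B G L' R' φ where
  mem hv hvR := hL _ hv hvR (h.mem (hB hv) (mt (hR _ hv) hvR))
  ne hu hv := h.ne (hB hu) (hB hv)

theorem of_mem (h : IsListColoring A G L R φ) (hR : ∀ v ∈ A, v ∈ R → v ∉ R' → φ v ∈ L v) :
    IsListColoring A G L R' φ where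
  mem {v} hv hvR' := by_cases (fun hvR : v ∈ R => hR v hv hvR hvR') (h.mem hv)
  ne := h.ne

variable [DecidableEq V] [DecidableEq α]

theorem piecewise_reserve (hφ : IsListColoring (A \ W) G (reserve G S L W K) R φ)
    (hψ : IsListColoring W G L R ψ) (hK : ∀ w ∈ W, ψ w ∈ K) (hRS : ∀ v ∈ A, v ∈ R → v ∈ S)
    (hne : ∀ w ∈ W, ∀ z ∈ A \ W, z ∈ S → G.Adj w z → φ z ≠ ψ w) :
    IsListColoring A G L R (W.piecewise ψ φ) where
  mem {v} hv hvR := by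
    by_cases hvW : v ∈ W
    · simpa [hvW] using hψ.mem hvW hvR
    · simpa [hvW] using reserve_subset G S L W K v (hφ.mem (by simp [hv, hvW]) hvR)
  ne {u v} hu hv huv := by
    have hcross : ∀ {w z}, w ∈ W → z ∈ A → z ∉ W → G.Adj w z → φ z ≠ ψ w := by
      intro w z hw hz hzW hwz
      by_cases hzS : z ∈ S
      · exact hne w hw z (by simp [hz, hzW]) hzS hwz
      · have := hφ.mem (by simp [hz, hzW]) (mt (hRS z hz) hzS)
        rw [reserve_of_adj hw hwz hzS, Finset.mem_sdiff] at this
        exact fun h => this.2 (h ▸ hK w hw)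
    by_cases huW : u ∈ W <;> by_cases hvW : v ∈ W <;> simp only [huW, hvW, not_false_eq_true,
      Finset.piecewise_eq_of_mem, Finset.piecewise_eq_of_notMem]
    · exact hψ.ne huW hvW huv
    · exact (hcross huW hv hvW huv).symm
    · exact hcross hvW hu huW huv.symm
    · exact hφ.ne (by simp [hu, huW]) (by simp [hv, hvW]) huv

theorem update_reserve {γ : α} (hφ : IsListColoring (A \ {v}) G (reserve G S L {v} K) R φ)
    (hγK : γ ∈ K) (hγL : v ∉ R → γ ∈ L v) (hRS : ∀ v ∈ A, v ∈ R → v ∈ S)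
    (hne : ∀ z ∈ A, z ∈ S → G.Adj v z → φ z ≠ γ) :
    IsListColoring A G L R (Function.update φ v γ) := by
  rw [← Finset.piecewise_singleton (fun _ => γ)]
  refine hφ.piecewise_reserve ⟨?_, ?_⟩ (by simpa) hRS (by simpa using fun z hz _ => hne z hz)
  · simpa using hγL
  · simp

end IsListColoring

/- The two colorings agree on the common edge, and no other edge meets both sides. -/
theorem EdgeSeparation.glue [DecidableEq V] (h : EdgeSeparation A G S u v A₁ A₂) {f g : V → α}
    (hf : IsListColoring A₁ G L R f) (hg : IsListColoring A₂ G L {u, v} g) (hu : f u = g u)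
    (hv : f v = g v) : ∃ φ, IsListColoring A G L R φ ∧ EqOn φ f A₁ ∧ EqOn φ g A₂ := by
  have hf' : EqOn (A₁.piecewise f g) f A₁ := fun x hx => Finset.piecewise_eq_of_mem _ _ _ hx
  have hg' : EqOn (A₁.piecewise f g) g A₂ := fun x hx => by
    by_cases hx₁ : x ∈ A₁
    · rw [hf' hx₁]
      obtain rfl | rfl := h.eq_or_eq hx₁ hx <;> assumption
    · exact Finset.piecewise_eq_of_notMem _ _ _ hx₁
  refine ⟨_, ⟨fun {x} hx hxR => ?_, fun {x y} hx hy hxy => ?_⟩, hf', hg'⟩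
  · by_cases hx₁ : x ∈ A₁
    · exact hf' hx₁ ▸ hf.mem hx₁ hxR
    · have hx₂ := (h.mem_or_mem hx).resolve_left hx₁
      refine hg' hx₂ ▸ hg.mem hx₂ ?_
      rintro (rfl | rfl)
      exacts [hx₁ h.edge_left.left_mem, hx₁ h.edge_left.right_mem]
  · obtain ⟨hx', hy'⟩ | ⟨hx', hy'⟩ := h.adj_mem hx hy hxy
    · exact hf' hx' ▸ hf' hy' ▸ hf.ne hx' hy' hxy
    · exact hg' hx' ▸ hg' hy' ▸ hg.ne hx' hy' hxy

end ListColoring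

/-- Thomassen's theorem for `A`: with Thomassen lists, every precoloring of two adjacent boundary
vertices, of one boundary vertex, or of no vertex at all extends to `A`. -/
structure ThomassenExtendable {V : Type*} (A : Finset V) (G : SimpleGraph V) (α : Type*) :
    Prop where
  edge : ∀ {S} {L : V → Finset α} {x y c d}, ApexDrawing A G S → BoundaryEdge A G S x y → c ≠ d →
    ThomassenLists A S L {x, y} → ∃ φ, φ x = c ∧ φ y = d ∧ IsListColoring A G L {x, y} φ
  vertex : ∀ {S} {L : V → Finset α} {x c}, ApexDrawing A G S → x ∈ A → x ∈ S →
    ThomassenLists A S L {x} → ∃ φ, φ x = c ∧ IsListColoring A G L {x} φ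
  empty : ∀ {S} {L : V → Finset α}, ApexDrawing A G S → ThomassenLists A S L ∅ →
    ∃ φ, IsListColoring A G L ∅ φ

section Thomassen

variable {V α : Type*} {A A₁ A₂ W : Finset V} {G : SimpleGraph V} {S R : Set V}
  {L : V → Finset α} {u v x y : V} {c d : α}

namespace ThomassenExtendable

theorem edge_of_separation [DecidableEq V] (ih : ∀ B ⊂ A, ThomassenExtendable B G α)
    (D : ApexDrawing A G S) (hxy : BoundaryEdge A G S x y) (hcd : c ≠ d)
    (hL : ThomassenLists A S L {x, y}) (h : EdgeSeparation A G S u v A₁ A₂) :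
    ∃ φ, φ x = c ∧ φ y = d ∧ IsListColoring A G L {x, y} φ := by
  wlog h₁ : x ∈ A₁ ∧ y ∈ A₁ generalizing A₁ A₂
  · exact this h.symm ((h.adj_mem hxy.left_mem hxy.right_mem hxy.adj).resolve_left h₁)
  obtain ⟨f, hfx, hfy, hf⟩ := (ih A₁ h.left_ssubset).edge
    (D.restrict h.left_ssubset.subset fun _ _ => id)
    (hxy.mono h₁.1 h₁.2 subset_rfl) hcd
    (hL.mono h.left_ssubset.subset fun _ _ => id)
  obtain ⟨g, hgu, hgv, hg⟩ := (ih A₂ h.right_ssubset).edge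
    (D.restrict h.right_ssubset.subset fun _ _ => id) h.symm.edge_left
    (hf.ne h.edge_left.left_mem h.edge_left.right_mem h.edge.adj)
    (hL.mono h.right_ssubset.subset fun z hz => by
      rintro (rfl | rfl)
      exacts [h.eq_or_eq h₁.1 hz, h.eq_or_eq h₁.2 hz])
  obtain ⟨φ, hφ, hφf, -⟩ := h.glue hf hg hgu.symm hgv.symm
  exact ⟨φ, (hφf h₁.1).trans hfx, (hφf h₁.2).trans hfy, hφ⟩

/- Of the two colors kept free for `v`, one differs from that of its only other neighbor on the
boundary. -/
theorem edge_of_neighbor [DecidableEq V] (ih : ∀ B ⊂ A, ThomassenExtendable B G α)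
    (hN : Unseparated A G S) (D : ApexDrawing A G S) (hxy : BoundaryEdge A G S x y) (hcd : c ≠ d)
    (hL : ThomassenLists A S L {x, y}) (hxv : BoundaryEdge A G S x v) (hvy : v ≠ y) :
    ∃ φ, φ x = c ∧ φ y = d ∧ IsListColoring A G L {x, y} φ := by
  classical
  have hvR : v ∉ ({x, y} : Set V) := by simp [hxv.adj.ne', hvy]
  obtain ⟨K, hKL, hK⟩ := Finset.exists_subset_card_eq (s := L v \ {c}) (n := 2) (by
    have := hL.three_le hxv.right_mem hvR
    have := Finset.le_card_sdiff {c} (L v)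
    rw [Finset.card_singleton] at this
    omega)
  obtain ⟨φ, hφx, hφy, hφ⟩ := (ih _ (Finset.sdiff_ssubset (by simpa using hxv.right_mem)
    (Finset.singleton_nonempty v))).edge (L := reserve G S L {v} K)
    (D.deleteBoundary (by simpa using hxv.right_mem) (by simpa using hxv.right_mem_boundary))
    (hxy.mono (by simp [hxv.left_mem, hxv.adj.ne]) (by simp [hxy.right_mem, hvy.symm])
      subset_union_left) hcd
    ((hL.reserve {v} hK.le).mono Finset.sdiff_subset fun _ _ => id)
  have hγ : ∃ γ ∈ K, ∀ z, BoundaryEdge A G S v z → z ≠ x → φ z ≠ γ := by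
    by_contra! hbad
    obtain ⟨γ₁, γ₂, hγ, rfl⟩ := Finset.card_eq_two.1 hK
    obtain ⟨z₁, hz₁, hzx₁, rfl⟩ := hbad γ₁ (by simp)
    obtain ⟨z₂, hz₂, hzx₂, rfl⟩ := hbad γ₂ (by simp)
    obtain h | h | h := hN.boundaryEdge_eq_or_eq_or_eq D hxv.symm hz₁ hz₂
    exacts [hzx₁ h.symm, hzx₂ h.symm, hγ (congrArg φ h)]
  obtain ⟨γ, hγK, hγ⟩ := hγ
  have hγL := Finset.mem_sdiff.1 (hKL hγK)
  refine ⟨Function.update φ v γ, ?_, ?_, hφ.update_reserve hγK (fun _ => hγL.1) ?_ ?_⟩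
  · rw [Function.update_of_ne hxv.adj.ne, hφx]
  · rw [Function.update_of_ne hvy.symm, hφy]
  · rintro z - (rfl | rfl)
    exacts [hxy.left_mem_boundary, hxy.right_mem_boundary]
  · intro z hzA hzS hvz
    obtain rfl | hzx := eq_or_ne z x
    · exact fun h => hγL.2 (by simp [← hφx, h])
    · exact hγ z ⟨hxv.right_mem, hzA, hxv.right_mem_boundary, hzS, hvz⟩ hzx

theorem edge_of_forall_neighbor (ih : ∀ B ⊂ A, ThomassenExtendable B G α)
    (D : ApexDrawing A G S) (hxy : BoundaryEdge A G S x y) (hcd : c ≠ d)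
    (hL : ThomassenLists A S L {x, y}) (h : ∀ v, BoundaryEdge A G S x v → v = y) :
    ∃ φ, φ x = c ∧ φ y = d ∧ IsListColoring A G L {x, y} φ := by
  classical
  obtain ⟨φ, hφy, hφ⟩ := (ih _ (Finset.sdiff_ssubset (by simpa using hxy.left_mem)
    (Finset.singleton_nonempty x))).vertex (L := reserve G S L {x} {c}) (c := d)
    (D.deleteBoundary (by simpa using hxy.left_mem) (by simpa using hxy.left_mem_boundary))
    (x := y) (by simp [hxy.right_mem, hxy.adj.ne']) (.inl hxy.right_mem_boundary)
    ((hL.reserve {x} (by simp)).mono Finset.sdiff_subset fun z hz hzR =>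
      hzR.resolve_left (by simpa using (Finset.mem_sdiff.1 hz).2))
  refine ⟨Function.update φ x c, by simp, by rw [Function.update_of_ne hxy.adj.ne', hφy],
    (hφ.mono subset_rfl (fun _ _ => .inr) fun _ _ _ => subset_rfl).update_reserve
      (Finset.mem_singleton_self c) (fun hx => absurd (.inl rfl) hx) ?_ fun z hzA hzS hxz => ?_⟩
  · rintro z - (rfl | rfl)
    exacts [hxy.left_mem_boundary, hxy.right_mem_boundary]
  · rw [h z ⟨hxy.left_mem, hzA, hxy.left_mem_boundary, hzS, hxz⟩, hφy]
    exact hcd.symm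

theorem edge_of_ssubset (ih : ∀ B ⊂ A, ThomassenExtendable B G α)
    (D : ApexDrawing A G S) (hxy : BoundaryEdge A G S x y) (hcd : c ≠ d)
    (hL : ThomassenLists A S L {x, y}) :
    ∃ φ, φ x = c ∧ φ y = d ∧ IsListColoring A G L {x, y} φ := by
  classical
  by_cases hN : Unseparated A G S
  · by_cases h : ∀ v, BoundaryEdge A G S x v → v = y
    · exact edge_of_forall_neighbor ih D hxy hcd hL h
    · push Not at h
      obtain ⟨v, hxv, hvy⟩ := h
      exact edge_of_neighbor ih hN D hxy hcd hL hxv hvy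
  · obtain ⟨u, v, A₁, A₂, h⟩ := not_unseparated.1 hN
    exact edge_of_separation ih D hxy hcd hL h

theorem vertex_of_ssubset (ih : ∀ B ⊂ A, ThomassenExtendable B G α)
    (D : ApexDrawing A G S) (hxA : x ∈ A) (hxS : x ∈ S) (hL : ThomassenLists A S L {x}) :
    ∃ φ, φ x = c ∧ IsListColoring A G L {x} φ := by
  classical
  by_cases h : ∃ y, BoundaryEdge A G S x y
  · obtain ⟨y, hxy⟩ := h
    obtain ⟨d, hd, hdc⟩ := Finset.exists_mem_ne
      (one_lt_two.trans_le (by linarith [hL.three_le hxy.right_mem hxy.adj.ne'])) c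
    obtain ⟨φ, hφx, hφy, hφ⟩ := edge_of_ssubset ih D hxy hdc.symm
      (hL.mono subset_rfl fun _ _ => .inl)
    refine ⟨φ, hφx, hφ.of_mem ?_⟩
    rintro z - (rfl | rfl) hz
    · exact absurd rfl hz
    · exact hφy ▸ hd
  · push Not at h
    obtain ⟨φ, hφ⟩ := (ih _ (Finset.sdiff_ssubset (by simpa using hxA)
      (Finset.singleton_nonempty x))).empty (L := reserve G S L {x} {c})
      (D.deleteBoundary (by simpa using hxA) (by simpa using hxS))
      ((hL.reserve {x} (by simp)).mono Finset.sdiff_subset fun z hz hzx => by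
        simp_all)
    refine ⟨Function.update φ x c, by simp,
      (hφ.mono subset_rfl (fun _ _ => False.elim) fun _ _ _ => subset_rfl).update_reserve
        (Finset.mem_singleton_self c) (absurd rfl) ?_ fun z hzA hzS hxz => ?_⟩
    · rintro z - rfl
      exact hxS
    · exact absurd ⟨hxA, hzA, hxS, hzS, hxz⟩ (h z)

theorem empty_of_ssubset [Nonempty α] (ih : ∀ B ⊂ A, ThomassenExtendable B G α)
    (D : ApexDrawing A G S) (hL : ThomassenLists A S L ∅) :
    ∃ φ, IsListColoring A G L ∅ φ := by
  classical
  by_cases hAS : ∃ v ∈ A, v ∈ S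
  · obtain ⟨v, hvA, hvS⟩ := hAS
    obtain ⟨c, hc⟩ := Finset.card_pos.1 (by linarith [hL.three_le hvA (notMem_empty v)])
    obtain ⟨φ, rfl, hφ⟩ := vertex_of_ssubset ih D hvA hvS (c := c)
      (hL.mono subset_rfl fun _ _ => False.elim)
    exact ⟨φ, hφ.of_mem fun z _ hz _ => (mem_singleton_iff.1 hz) ▸ hc⟩
  · push Not at hAS
    obtain rfl | ⟨v, hv⟩ := A.eq_empty_or_nonempty
    · exact ⟨fun _ => Classical.arbitrary α, by simp, by simp⟩
    obtain ⟨c, hc⟩ := Finset.card_pos.1 (by linarith [hL.three_le hv (notMem_empty v)])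
    obtain ⟨φ, hφ⟩ := (ih _ (Finset.sdiff_ssubset (by simpa using hv)
      (Finset.singleton_nonempty v))).empty (L := reserve G S L {v} {c})
      ((D.refocus hv).restrict (Finset.sdiff_singleton_eq_erase v A).subset fun z hz hzS => by
        simpa [hAS z (Finset.sdiff_subset hz)] using hzS)
      ((hL.reserve {v} (by simp)).mono Finset.sdiff_subset fun _ _ => id)
    exact ⟨_, hφ.update_reserve (Finset.mem_singleton_self c) (fun _ => hc)
      (fun _ _ => False.elim) fun z hzA hzS => absurd hzS (hAS z hzA)⟩

end ThomassenExtendable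

theorem thomassenExtendable [Nonempty α] (A : Finset V) (G : SimpleGraph V) :
    ThomassenExtendable A G α := by
  induction A using Finset.strongInduction with
  | H A ih => exact ⟨ThomassenExtendable.edge_of_ssubset ih,
      ThomassenExtendable.vertex_of_ssubset ih, ThomassenExtendable.empty_of_ssubset ih⟩

end Thomassen

/-- The pairs of distinct colors outside `P` form part of a government: they all use one fixed
color in the first place, or all use one fixed color in the second place (dictatorships), or all
use the same two colors (a democracy). -/
def Governed {α : Type*} (P : α → α → Prop) : Prop :=
  (∃ a, ∀ c₁ c₂, c₁ ≠ c₂ → c₁ ≠ a → P c₁ c₂) ∨ (∃ a, ∀ c₁ c₂, c₁ ≠ c₂ → c₂ ≠ a → P c₁ c₂) ∨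
    ∃ a b, ∀ c₁ c₂, c₁ ≠ c₂ → s(c₁, c₂) ≠ s(a, b) → P c₁ c₂

namespace Governed

variable {α : Type*} {P P' : α → α → Prop}

theorem mono (h : Governed P) (hPP' : ∀ c₁ c₂, c₁ ≠ c₂ → P c₁ c₂ → P' c₁ c₂) : Governed P' :=
  h.imp (.imp fun _ h c₁ c₂ hc ha => hPP' c₁ c₂ hc (h c₁ c₂ hc ha)) <|
    .imp (.imp fun _ h c₁ c₂ hc ha => hPP' c₁ c₂ hc (h c₁ c₂ hc ha)) <|
      .imp fun _ => .imp fun _ h c₁ c₂ hc hab => hPP' c₁ c₂ hc (h c₁ c₂ hc hab)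

theorem of_forall [Nonempty α] (h : ∀ c₁ c₂, c₁ ≠ c₂ → P c₁ c₂) : Governed P :=
  .inl ⟨Classical.arbitrary α, fun c₁ c₂ hc _ => h c₁ c₂ hc⟩

theorem exists_pair (h : Governed P) {s t : Finset α} (hs : 2 ≤ s.card) (ht : 3 ≤ t.card) :
    ∃ c₁ ∈ s, ∃ c₂ ∈ t, P c₁ c₂ := by
  classical
  obtain ⟨a, h⟩ | ⟨a, h⟩ | ⟨a, b, h⟩ := h
  · obtain ⟨c₁, hc₁, hca⟩ := Finset.exists_mem_ne hs a
    obtain ⟨c₂, hc₂, hcc⟩ := Finset.exists_mem_ne (one_lt_two.trans ht) c₁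
    exact ⟨c₁, hc₁, c₂, hc₂, h c₁ c₂ hcc.symm hca⟩
  · obtain ⟨c₂, hc₂, hca⟩ := Finset.exists_mem_ne (one_lt_two.trans ht) a
    obtain ⟨c₁, hc₁, hcc⟩ := Finset.exists_mem_ne hs c₂
    exact ⟨c₁, hc₁, c₂, hc₂, h c₁ c₂ hcc hca⟩
  · obtain ⟨c₁, hc₁⟩ := Finset.card_pos.1 (zero_lt_two.trans_le hs)
    let d := if c₁ = a then b else a
    obtain ⟨c₂, hc₂, hcd⟩ := Finset.exists_mem_notMem_of_card_lt_card
      ((Finset.card_le_two (a := c₁) (b := d)).trans_lt ht)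
    simp only [Finset.mem_insert, Finset.mem_singleton, not_or] at hcd
    refine ⟨c₁, hc₁, c₂, hc₂, h c₁ c₂ (Ne.symm hcd.1) fun hab => ?_⟩
    grind

end Governed

/-- The precoloring of `r₁` and `r₂` by `c₁` and `c₂` extends to a coloring of `A` that
satisfies `Q`. -/
def Extends {V α : Type*} (A : Finset V) (G : SimpleGraph V) (L : V → Finset α) (r₁ r₂ : V)
    (Q : (V → α) → Prop) (c₁ c₂ : α) : Prop :=
  ∃ φ, φ r₁ = c₁ ∧ φ r₂ = c₂ ∧ IsListColoring A G L {r₁, r₂} φ ∧ Q φ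

/-- With Thomassen lists except for two colors at one boundary vertex `p`, the precolorings of a
boundary edge that do not extend to `A` form part of a government. -/
def VertexGoverned {V : Type*} (A : Finset V) (G : SimpleGraph V) (α : Type*) : Prop :=
  ∀ {S} {L : V → Finset α} {r₁ r₂ p}, ApexDrawing A G S → BoundaryEdge A G S r₁ r₂ → p ∈ A →
    p ∈ S → p ≠ r₁ → p ≠ r₂ → 2 ≤ (L p).card → ThomassenLists A S L {r₁, r₂, p} →
    Governed (Extends A G L r₁ r₂ fun _ => True)

/-- With Thomassen lists, the precolorings of a boundary edge that force a given pair of colors on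
a boundary edge form part of a government. -/
def EdgeGoverned {V : Type*} (A : Finset V) (G : SimpleGraph V) (α : Type*) : Prop :=
  ∀ {S} {L : V → Finset α} {r₁ r₂ u v}, ApexDrawing A G S → BoundaryEdge A G S r₁ r₂ →
    BoundaryEdge A G S u v → ThomassenLists A S L {r₁, r₂} →
    ∀ a b, Governed (Extends A G L r₁ r₂ fun φ => s(φ u, φ v) ≠ s(a, b))

section Governments

variable {V α : Type*} {A A₁ A₂ : Finset V} {G : SimpleGraph V} {S : Set V}
  {L : V → Finset α} {r₁ r₂ u v p : V} {Q Q' : (V → α) → Prop} {c₁ c₂ : α}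

theorem Extends.mono {L' : V → Finset α} (h : Extends A G L r₁ r₂ Q c₁ c₂)
    (hL : ∀ v ∈ A, L v ⊆ L' v)
    (hQ : ∀ φ, IsListColoring A G L {r₁, r₂} φ → Q φ → Q' φ) :
    Extends A G L' r₁ r₂ Q' c₁ c₂ :=
  let ⟨φ, h₁, h₂, hφ, hQφ⟩ := h
  ⟨φ, h₁, h₂, hφ.mono subset_rfl (fun _ _ => id) fun v hv _ => hL v hv, hQ φ hφ hQφ⟩

theorem extends_of_ne (D : ApexDrawing A G S) (hr : BoundaryEdge A G S r₁ r₂)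
    (hL : ThomassenLists A S L {r₁, r₂}) (hc : c₁ ≠ c₂) :
    Extends A G L r₁ r₂ (fun _ => True) c₁ c₂ :=
  have : Nonempty α := ⟨c₁⟩
  let ⟨φ, h₁, h₂, hφ⟩ := (thomassenExtendable A G).edge D hr hc hL
  ⟨φ, h₁, h₂, hφ, trivial⟩

theorem VertexGoverned.avoid [DecidableEq α] (hV : VertexGoverned A G α) (D : ApexDrawing A G S)
    (hr : BoundaryEdge A G S r₁ r₂) (hpA : p ∈ A) (hpS : p ∈ S) (hp₁ : p ≠ r₁) (hp₂ : p ≠ r₂)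
    {K : Finset α} (hK : 2 ≤ (L p \ K).card) (hL : ThomassenLists A S L {r₁, r₂}) :
    Governed (Extends A G L r₁ r₂ fun φ => φ p ∉ K) := by
  classical
  have hne : ∀ {z}, z ∉ ({r₁, r₂, p} : Set V) → z ≠ p := by rintro z hz rfl; simp at hz
  refine (hV (L := Function.update L p (L p \ K)) D hr hpA hpS hp₁ hp₂ (by simpa) ⟨?_, ?_⟩).mono
    fun c₁ c₂ _ hf => hf.mono (fun z _ => ?_) fun φ hφ _ hpK => ?_
  · intro z hz hzR
    rw [Function.update_of_ne (hne hzR)]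
    exact hL.three_le hz fun h => hzR (h.imp_right .inl)
  · intro z hz hzR hzS
    rw [Function.update_of_ne (hne hzR)]
    exact hL.five_le hz (fun h => hzR (h.imp_right .inl)) hzS
  · obtain rfl | hzp := eq_or_ne z p
    · simp [Finset.sdiff_subset]
    · rw [Function.update_of_ne hzp]
  · have := hφ.mem hpA (by simp [hp₁, hp₂])
    rw [Function.update_self, Finset.mem_sdiff] at this
    exact this.2 hpK

theorem VertexGoverned.avoid_color (hV : VertexGoverned A G α) (D : ApexDrawing A G S)
    (hr : BoundaryEdge A G S r₁ r₂) (hpA : p ∈ A) (hpS : p ∈ S)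
    (hL : ThomassenLists A S L {r₁, r₂}) (a : α) :
    Governed (Extends A G L r₁ r₂ fun φ => φ p ≠ a) := by
  classical
  obtain rfl | hp₁ := eq_or_ne p r₁
  · refine .inl ⟨a, fun c₁ c₂ hc hca => ?_⟩
    obtain ⟨φ, rfl, h₂, hφ, -⟩ := extends_of_ne D hr hL hc
    exact ⟨φ, rfl, h₂, hφ, hca⟩
  obtain rfl | hp₂ := eq_or_ne p r₂
  · refine .inr (.inl ⟨a, fun c₁ c₂ hc hca => ?_⟩)
    obtain ⟨φ, h₁, rfl, hφ, -⟩ := extends_of_ne D hr hL hc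
    exact ⟨φ, h₁, rfl, hφ, hca⟩
  have hcard : 2 ≤ (L p \ {a}).card := by
    have := hL.three_le hpA (by simp [hp₁, hp₂])
    have := Finset.le_card_sdiff {a} (L p)
    rw [Finset.card_singleton] at this
    omega
  simpa using hV.avoid D hr hpA hpS hp₁ hp₂ hcard hL

theorem governed_avoid_pair_of_eq (D : ApexDrawing A G S) (hr : BoundaryEdge A G S r₁ r₂)
    (hroot : s(u, v) = s(r₁, r₂)) (hL : ThomassenLists A S L {r₁, r₂}) (a b : α) :
    Governed (Extends A G L r₁ r₂ fun φ => s(φ u, φ v) ≠ s(a, b)) := by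
  refine .inr (.inr ⟨a, b, fun c₁ c₂ hc hab => ?_⟩)
  obtain ⟨φ, rfl, rfl, hφ, -⟩ := extends_of_ne D hr hL hc
  have hmap := congrArg (Sym2.map φ) hroot
  simp only [Sym2.map_mk] at hmap
  exact ⟨φ, rfl, rfl, hφ, fun h => hab (hmap.symm.trans h)⟩

variable [DecidableEq V]

theorem extends_of_left (D : ApexDrawing A G S)
    (h : EdgeSeparation A G S u v A₁ A₂) (hL : ThomassenLists A₂ S L {u, v})
    (hQ : DependsOn Q A₁) (hf : Extends A₁ G L r₁ r₂ Q c₁ c₂) (h₁ : r₁ ∈ A₁) (h₂ : r₂ ∈ A₁) :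
    Extends A G L r₁ r₂ Q c₁ c₂ := by
  obtain ⟨f, rfl, rfl, hf, hQf⟩ := hf
  obtain ⟨g, hu, hv, hg, -⟩ := extends_of_ne (D.restrict h.right_ssubset.subset fun _ _ => id)
    h.symm.edge_left hL (hf.ne h.edge_left.left_mem h.edge_left.right_mem h.edge.adj)
  obtain ⟨φ, hφ, hφf, -⟩ := h.glue hf hg hu.symm hv.symm
  exact ⟨φ, hφf h₁, hφf h₂, hφ, (hQ fun _ hx => hφf hx) ▸ hQf⟩

theorem extends_of_right (h : EdgeSeparation A G S u v A₁ A₂) (hQ : DependsOn Q A₂)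
    (hf : Extends A₁ G L r₁ r₂ (fun φ => Extends A₂ G L u v Q (φ u) (φ v)) c₁ c₂)
    (h₁ : r₁ ∈ A₁) (h₂ : r₂ ∈ A₁) : Extends A G L r₁ r₂ Q c₁ c₂ := by
  obtain ⟨f, rfl, rfl, hf, g, hu, hv, hg, hQg⟩ := hf
  obtain ⟨φ, hφ, hφf, hφg⟩ := h.glue hf hg hu.symm hv.symm
  exact ⟨φ, hφf h₁, hφf h₂, hφ, (hQ fun _ hx => hφg hx) ▸ hQg⟩

/- A government for the ends of the separating edge restricts the colors of the other side as
an edge or a vertex does, so it is again governed by the precolored edge. -/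
theorem EdgeSeparation.governed_of_right (h : EdgeSeparation A G S u v A₁ A₂)
    (D : ApexDrawing A G S) (hV : VertexGoverned A₁ G α) (hE : EdgeGoverned A₁ G α)
    (hr : BoundaryEdge A₁ G S r₁ r₂) (hL : ThomassenLists A₁ S L {r₁, r₂})
    (hQ : DependsOn Q A₂) (hP : Governed (Extends A₂ G L u v Q)) :
    Governed (Extends A G L r₁ r₂ Q) := by
  have hD := D.restrict h.left_ssubset.subset fun _ _ => id
  have hlift : ∀ {Q'}, Governed (Extends A₁ G L r₁ r₂ Q') →
      (∀ c₁ c₂, c₁ ≠ c₂ → ∀ φ : V → α, φ u = c₁ → φ v = c₂ → Q' φ → Extends A₂ G L u v Q c₁ c₂) →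
      Governed (Extends A G L r₁ r₂ Q) := fun hg hQ' =>
    hg.mono fun c₁ c₂ _ hf => extends_of_right h hQ
      (hf.mono (fun _ _ => subset_rfl) fun φ hφ hφQ => hQ' _ _
        (hφ.ne h.edge_left.left_mem h.edge_left.right_mem h.edge.adj) φ rfl rfl hφQ)
      hr.left_mem hr.right_mem
  obtain ⟨a, hP⟩ | ⟨a, hP⟩ | ⟨a, b, hP⟩ := hP
  · refine hlift (hV.avoid_color hD hr h.edge_left.left_mem h.edge.left_mem_boundary hL a) ?_
    rintro _ _ hne φ rfl rfl
    exact hP _ _ hne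
  · refine hlift (hV.avoid_color hD hr h.edge_left.right_mem h.edge.right_mem_boundary hL a) ?_
    rintro _ _ hne φ rfl rfl
    exact hP _ _ hne
  · refine hlift (hE hD hr h.edge_left hL a b) ?_
    rintro _ _ hne φ rfl rfl
    exact hP _ _ hne

theorem vertexGoverned_of_separation
    (ih : ∀ B ⊂ A, VertexGoverned B G α ∧ EdgeGoverned B G α) (D : ApexDrawing A G S)
    (hr : BoundaryEdge A G S r₁ r₂) (hpA : p ∈ A) (hpS : p ∈ S) (hp₁ : p ≠ r₁) (hp₂ : p ≠ r₂)
    (hp : 2 ≤ (L p).card) (hL : ThomassenLists A S L {r₁, r₂, p})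
    (h : EdgeSeparation A G S u v A₁ A₂) : Governed (Extends A G L r₁ r₂ fun _ => True) := by
  wlog h₁ : r₁ ∈ A₁ ∧ r₂ ∈ A₁ generalizing A₁ A₂
  · exact this h.symm ((h.adj_mem hr.left_mem hr.right_mem hr.adj).resolve_left h₁)
  have hr₁ : BoundaryEdge A₁ G S r₁ r₂ :=
    hr.mono h₁.1 h₁.2 subset_rfl
  have hmem : ∀ z ∈ A₂, z ∈ ({r₁, r₂} : Set V) → z ∈ ({u, v} : Set V) := by
    rintro z hz (rfl | rfl)
    exacts [h.eq_or_eq h₁.1 hz, h.eq_or_eq h₁.2 hz]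
  by_cases hpA₁ : p ∈ A₁
  · refine ((ih A₁ h.left_ssubset).1 (D.restrict h.left_ssubset.subset fun _ _ => id) hr₁ hpA₁ hpS
      hp₁ hp₂ hp (hL.mono h.left_ssubset.subset fun _ _ => id)).mono fun c₁ c₂ _ hf =>
        extends_of_left D h (hL.mono h.right_ssubset.subset ?_) (fun _ _ _ => rfl) hf h₁.1 h₁.2
    rintro z hz (hzr | hzr | rfl)
    exacts [hmem z hz (.inl hzr), hmem z hz (.inr hzr), h.eq_or_eq hpA₁ hz]
  · have hpA₂ := (h.mem_or_mem hpA).resolve_left hpA₁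
    refine h.governed_of_right D (ih A₁ h.left_ssubset).1 (ih A₁ h.left_ssubset).2 hr₁
      (hL.mono h.left_ssubset.subset ?_) (fun _ _ _ => rfl)
      ((ih A₂ h.right_ssubset).1 (p := p) (D.restrict h.right_ssubset.subset fun _ _ => id)
        h.symm.edge_left hpA₂ hpS ?_ ?_ hp (hL.mono h.right_ssubset.subset ?_))
    · rintro z hz (hzr | hzr | rfl)
      exacts [.inl hzr, .inr hzr, absurd hz hpA₁]
    · rintro rfl
      exact hpA₁ h.edge_left.left_mem
    · rintro rfl
      exact hpA₁ h.edge_left.right_mem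
    · rintro z hz (hzr | hzr | hzp)
      exacts [(hmem z hz (.inl hzr)).imp_right .inl, (hmem z hz (.inr hzr)).imp_right .inl,
        .inr (.inr hzp)]

theorem edgeGoverned_of_separation {x y : V}
    (ih : ∀ B ⊂ A, VertexGoverned B G α ∧ EdgeGoverned B G α) (D : ApexDrawing A G S)
    (hr : BoundaryEdge A G S r₁ r₂) (hxy : BoundaryEdge A G S x y)
    (hL : ThomassenLists A S L {r₁, r₂}) (a b : α) (h : EdgeSeparation A G S u v A₁ A₂) :
    Governed (Extends A G L r₁ r₂ fun φ => s(φ x, φ y) ≠ s(a, b)) := by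
  wlog h₁ : r₁ ∈ A₁ ∧ r₂ ∈ A₁ generalizing A₁ A₂
  · exact this h.symm ((h.adj_mem hr.left_mem hr.right_mem hr.adj).resolve_left h₁)
  have hr₁ : BoundaryEdge A₁ G S r₁ r₂ :=
    hr.mono h₁.1 h₁.2 subset_rfl
  have hL₁ := hL.mono h.left_ssubset.subset fun _ _ => id
  have hL₂ : ThomassenLists A₂ S L {u, v} := hL.mono h.right_ssubset.subset <| by
    rintro z hz (rfl | rfl)
    exacts [h.eq_or_eq h₁.1 hz, h.eq_or_eq h₁.2 hz]
  have hdep : ∀ {B : Finset V}, x ∈ B → y ∈ B →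
      DependsOn (fun φ : V → α => s(φ x, φ y) ≠ s(a, b)) B := fun hx hy φ ψ hφψ => by
    simp only [hφψ x hx, hφψ y hy]
  obtain ⟨hx, hy⟩ | ⟨hx, hy⟩ := h.adj_mem hxy.left_mem hxy.right_mem hxy.adj
  · exact ((ih A₁ h.left_ssubset).2 (D.restrict h.left_ssubset.subset fun _ _ => id)
      hr₁ (hxy.mono hx hy subset_rfl) hL₁ a b).mono
        fun c₁ c₂ _ hf => extends_of_left D h hL₂ (hdep hx hy) hf h₁.1 h₁.2
  · exact h.governed_of_right D (ih A₁ h.left_ssubset).1 (ih A₁ h.left_ssubset).2 hr₁ hL₁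
      (hdep hx hy) ((ih A₂ h.right_ssubset).2
        (D.restrict h.right_ssubset.subset fun _ _ => id) h.symm.edge_left
        (hxy.mono hx hy subset_rfl) hL₂ a b)

end Governments

/-- The vertices `w 0, …, w (m - 1)`. -/
def pathVerts {V : Type*} [DecidableEq V] (w : ℕ → V) (m : ℕ) : Finset V :=
  (Finset.range m).image w

/-- `z` is a vertex of `A` seen from the apex that lies off the path `w 0, …, w (m - 1)` and is
adjacent to its vertex `w i`. -/
structure PathExit {V : Type*} [DecidableEq V] (A : Finset V) (G : SimpleGraph V) (S : Set V)
    (w : ℕ → V) (m i : ℕ) (z : V) : Prop where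
  lt : i < m
  mem : z ∈ A
  mem_boundary : z ∈ S
  notMem : z ∉ pathVerts w m
  adj : G.Adj (w i) z

/-- The coloring `γ, δ, γ, δ, …` of the vertices of a path. -/
def alternate {α : Type*} (γ δ : α) (i : ℕ) : α := if Even i then γ else δ

theorem alternate_ne_succ {α : Type*} {γ δ : α} (h : γ ≠ δ) (i : ℕ) :
    alternate γ δ i ≠ alternate γ δ (i + 1) := by
  by_cases hi : Even i <;> simp [alternate, Nat.even_add_one, hi, h, h.symm]

theorem alternate_ne_swap {α : Type*} {γ δ : α} (h : γ ≠ δ) (i : ℕ) :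
    alternate γ δ i ≠ alternate δ γ i := by
  by_cases hi : Even i <;> simp [alternate, hi, h, h.symm]

theorem alternate_eq_or_eq {α : Type*} (γ δ : α) (i : ℕ) :
    alternate γ δ i = γ ∨ alternate γ δ i = δ := ite_eq_or_eq _ _ _

section BoundaryPaths

variable {V : Type*} {A : Finset V} {G : SimpleGraph V} {S : Set V}
  {w : ℕ → V} {m i j : ℕ} {x v z : V}

namespace BoundaryPath

theorem singleton (hvA : v ∈ A) (hvS : v ∈ S) : BoundaryPath A G S (fun _ => v) 1 where
  mem _ := hvA
  mem_boundary _ := hvS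
  injOn := by simp [InjOn]
  adj hi := by omega

theorem length_le_card (h : BoundaryPath A G S w m) : m ≤ A.card := by
  simpa using Finset.card_le_card_of_injOn (s := Finset.range m) w
    (fun i hi => h.mem (Finset.mem_range.1 hi)) (by simpa [← Set.Iio_def] using h.injOn)

theorem exists_longest {T : (ℕ → V) → ℕ → Prop} (hT : ∀ w m, T w m → BoundaryPath A G S w m)
    (h : T w m) : ∃ w' m', m ≤ m' ∧ T w' m' ∧ ∀ w'', ¬ T w'' (m' + 1) := by
  classical
  have hle : ∀ {w n}, T w n → n ≤ A.card := fun hn => (hT _ _ hn).length_le_card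
  let P : ℕ → Prop := fun n => ∃ w, T w n
  obtain ⟨w', hw'⟩ : P (Nat.findGreatest P A.card) := Nat.findGreatest_spec (hle h) ⟨w, h⟩
  refine ⟨w', _, Nat.le_findGreatest (hle h) ⟨w, h⟩, hw', fun w'' hw'' => ?_⟩
  exact absurd (Nat.le_findGreatest (hle hw'') (P := P) ⟨w'', hw''⟩) (by omega)

end BoundaryPath

variable [DecidableEq V]

theorem mem_pathVerts : v ∈ pathVerts w m ↔ ∃ i < m, w i = v := by
  simp [pathVerts]

theorem apply_mem_pathVerts (hi : i < m) : w i ∈ pathVerts w m :=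
  mem_pathVerts.2 ⟨i, hi, rfl⟩

theorem PathExit.apply_ne (h : PathExit A G S w m i z) (hj : j < m) : w j ≠ z :=
  fun hz => h.notMem (hz ▸ apply_mem_pathVerts hj)

namespace BoundaryPath

theorem pathVerts_subset (h : BoundaryPath A G S w m) : pathVerts w m ⊆ A := fun v hv => by
  obtain ⟨i, hi, rfl⟩ := mem_pathVerts.1 hv
  exact h.mem hi

theorem mem_boundary_of_mem_pathVerts (h : BoundaryPath A G S w m) (hv : v ∈ pathVerts w m) :
    v ∈ S := by
  obtain ⟨i, hi, rfl⟩ := mem_pathVerts.1 hv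
  exact h.mem_boundary hi

theorem sdiff_pathVerts_ssubset (h : BoundaryPath A G S w m) (hm : 0 < m) :
    A \ pathVerts w m ⊂ A :=
  Finset.sdiff_ssubset h.pathVerts_subset ⟨w 0, apply_mem_pathVerts hm⟩

theorem snoc (h : BoundaryPath A G S w m) (he : PathExit A G S w m i x) (hi : i + 1 = m) :
    BoundaryPath A G S (Function.update w m x) (m + 1) := by
  have hlt : ∀ {j}, j < m → Function.update w m x j = w j := fun hj =>
    Function.update_of_ne hj.ne _ _
  have hcases : ∀ {P : V → Prop}, (∀ j < m, P (w j)) → P x → ∀ {j}, j < m + 1 →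
      P (Function.update w m x j) := fun hw hx j hj => by
    obtain hj | rfl := Nat.lt_succ_iff_lt_or_eq.1 hj
    · exact hlt hj ▸ hw j hj
    · simpa
  refine ⟨hcases (fun _ => h.mem) he.mem, hcases (fun _ => h.mem_boundary) he.mem_boundary, ?_, ?_⟩
  · intro j hj k hk hjk
    obtain hj | rfl := Nat.lt_succ_iff_lt_or_eq.1 hj <;>
      obtain hk | rfl := Nat.lt_succ_iff_lt_or_eq.1 hk
    · rw [hlt hj, hlt hk] at hjk
      exact h.injOn hj hk hjk
    · rw [hlt hj, Function.update_self] at hjk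
      exact absurd hjk (he.apply_ne hj)
    · rw [hlt hk, Function.update_self] at hjk
      exact absurd hjk.symm (he.apply_ne hk)
    · rfl
  · intro j hj
    obtain hj | rfl : j + 1 < m ∨ j + 1 = m := by omega
    · rw [hlt (by omega), hlt hj]
      exact h.adj hj
    · obtain rfl : i = j := by omega
      rw [hlt (by omega), Function.update_self]
      exact he.adj

theorem exists_cons (h : BoundaryPath A G S w m) (he : PathExit A G S w m 0 x) :
    ∃ w', BoundaryPath A G S w' (m + 1) ∧ w' 0 = x ∧ ∀ i, w' (i + 1) = w i := by
  refine ⟨fun | 0 => x | i + 1 => w i, ⟨?_, ?_, ?_, ?_⟩, rfl, fun _ => rfl⟩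
  · rintro (_ | i) hi
    exacts [he.mem, h.mem (by omega)]
  · rintro (_ | i) hi
    exacts [he.mem_boundary, h.mem_boundary (by omega)]
  · rintro (_ | i) hi (_ | j) hj hij
    · rfl
    · exact absurd hij.symm (he.apply_ne (Nat.lt_of_succ_lt_succ hj))
    · exact absurd hij (he.apply_ne (Nat.lt_of_succ_lt_succ hi))
    · rw [h.injOn (Nat.lt_of_succ_lt_succ hi) (Nat.lt_of_succ_lt_succ hj) hij]
  · rintro (_ | i) hi
    exacts [he.adj.symm, h.adj (by omega)]

theorem exists_longest_from {X : Set V} (hvA : v ∈ A) (hvS : v ∈ S) (hvX : v ∈ X) :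
    ∃ w m, 0 < m ∧ BoundaryPath A G S w m ∧ (∀ i < m, w i ∈ X) ∧ w 0 = v ∧
      ∀ {i z}, PathExit A G S w m i z → i + 1 = m → z ∉ X := by
  obtain ⟨w, m, hm, ⟨h, hX, hv⟩, hmax⟩ := exists_longest (w := fun _ => v) (m := 1)
    (T := fun w m => BoundaryPath A G S w m ∧ (∀ i < m, w i ∈ X) ∧ w 0 = v) (fun _ _ h => h.1)
    ⟨singleton hvA hvS, fun _ _ => hvX, rfl⟩
  refine ⟨w, m, hm, h, hX, hv, fun {i z} he hi hz =>
    hmax _ ⟨h.snoc he hi, fun j hj => ?_, by rwa [Function.update_of_ne (by omega)]⟩⟩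
  obtain hj | rfl := Nat.lt_succ_iff_lt_or_eq.1 hj
  · rw [Function.update_of_ne hj.ne]
    exact hX j hj
  · simpa

theorem exists_longest_through {X : Set V} (hvA : v ∈ A) (hvS : v ∈ S) (hvX : v ∈ X) :
    ∃ w m, BoundaryPath A G S w m ∧ (∀ i < m, w i ∈ X) ∧ v ∈ pathVerts w m ∧
      ∀ {i z}, PathExit A G S w m i z → i = 0 ∨ i + 1 = m → z ∉ X := by
  obtain ⟨w, m, -, ⟨h, hX, hv⟩, hmax⟩ := exists_longest (w := fun _ => v) (m := 1)
    (T := fun w m => BoundaryPath A G S w m ∧ (∀ i < m, w i ∈ X) ∧ v ∈ pathVerts w m)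
    (fun _ _ h => h.1) ⟨singleton hvA hvS, fun _ _ => hvX, apply_mem_pathVerts one_pos⟩
  refine ⟨w, m, h, hX, hv, fun {i z} he hi hz => ?_⟩
  obtain ⟨k, hk, rfl⟩ := mem_pathVerts.1 hv
  obtain rfl | hi := hi
  · obtain ⟨w', h', hw'0, hw'⟩ := h.exists_cons he
    refine hmax w' ⟨h', ?_, mem_pathVerts.2 ⟨k + 1, by omega, hw' k⟩⟩
    rintro (_ | j) hj
    exacts [hw'0 ▸ hz, hw' j ▸ hX j (by omega)]
  · refine hmax _ ⟨h.snoc he hi, fun j hj => ?_, mem_pathVerts.2 ⟨k, by omega, ?_⟩⟩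
    · obtain hj | rfl := Nat.lt_succ_iff_lt_or_eq.1 hj
      · rw [Function.update_of_ne hj.ne]
        exact hX j hj
      · simpa
    · rw [Function.update_of_ne hk.ne]

theorem exit_index (h : BoundaryPath A G S w m) (hN : Unseparated A G S) (D : ApexDrawing A G S)
    (he : PathExit A G S w m i z) : i = 0 ∨ i + 1 = m := by
  by_contra! hi
  obtain ⟨i, rfl⟩ := Nat.exists_eq_succ_of_ne_zero hi.1
  have him := he.lt
  obtain heq | heq | heq := hN.boundaryEdge_eq_or_eq_or_eq D (h.edge him).symm
    (h.edge (i := i + 1) (by omega))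
    ⟨h.mem him, he.mem, h.mem_boundary him, he.mem_boundary, he.adj⟩
  · have := h.injOn (mem_Iio.2 (by omega)) (mem_Iio.2 (by omega)) heq
    omega
  · exact he.apply_ne (by omega) heq
  · exact he.apply_ne (by omega) heq

theorem exit_unique (h : BoundaryPath A G S w m) (hN : Unseparated A G S) (D : ApexDrawing A G S)
    (hm : 2 ≤ m) (he : PathExit A G S w m i y) (he' : PathExit A G S w m i z) : y = z := by
  have hi := he.lt
  obtain ⟨j, hj, hij⟩ : ∃ j < m, BoundaryEdge A G S (w i) (w j) := by
    obtain hi' | rfl : i + 1 < m ∨ i + 1 = m := by omega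
    · exact ⟨i + 1, hi', h.edge hi'⟩
    · obtain ⟨i, rfl⟩ := Nat.exists_eq_succ_of_ne_zero (show i ≠ 0 by omega)
      exact ⟨i, by omega, (h.edge hi).symm⟩
  obtain heq | heq | heq := hN.boundaryEdge_eq_or_eq_or_eq D hij
    ⟨h.mem hi, he.mem, h.mem_boundary hi, he.mem_boundary, he.adj⟩
    ⟨h.mem hi, he'.mem, h.mem_boundary hi, he'.mem_boundary, he'.adj⟩
  exacts [absurd heq (he.apply_ne hj), absurd heq (he'.apply_ne hj), heq]

theorem exit_eq_or_eq_or_eq (h : BoundaryPath A G S w m) (hN : Unseparated A G S)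
    (D : ApexDrawing A G S) {k : ℕ} (hx : PathExit A G S w m i x) (hy : PathExit A G S w m j y)
    (hz : PathExit A G S w m k z) :
    i = j ∧ x = y ∨ i = k ∧ x = z ∨ j = k ∧ y = z := by
  have hi := hx.lt
  have hj := hy.lt
  have hk := hz.lt
  obtain rfl | hm : m = 1 ∨ 2 ≤ m := by omega
  · obtain ⟨rfl, rfl, rfl⟩ : i = 0 ∧ j = 0 ∧ k = 0 := by omega
    have hedge : ∀ {v}, PathExit A G S w 1 0 v → BoundaryEdge A G S (w 0) v := fun he =>
      ⟨h.mem hi, he.mem, h.mem_boundary hi, he.mem_boundary, he.adj⟩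
    simpa using hN.boundaryEdge_eq_or_eq_or_eq D (hedge hx) (hedge hy) (hedge hz)
  · have hi' := h.exit_index hN D hx
    have hj' := h.exit_index hN D hy
    have hk' := h.exit_index hN D hz
    obtain rfl | rfl | rfl : i = j ∨ i = k ∨ j = k := by omega
    · exact .inl ⟨rfl, h.exit_unique hN D hm hx hy⟩
    · exact .inr (.inl ⟨rfl, h.exit_unique hN D hm hx hz⟩)
    · exact .inr (.inr ⟨rfl, h.exit_unique hN D hm hy hz⟩)

theorem exit_index_unique {r : V} (h : BoundaryPath A G S w m) (hN : Unseparated A G S)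
    (D : ApexDrawing A G S) (hrA : r ∈ A) (hrS : r ∈ S) (hrw : r ∉ pathVerts w m) (hrz : r ≠ z)
    (he : PathExit A G S w m i z) (he' : PathExit A G S w m j z) : i = j := by
  wlog hij : i ≤ j generalizing i j
  · exact (this he' he (le_of_not_ge hij)).symm
  have hj := he'.lt
  by_contra hne
  obtain rfl : i = 0 := (h.exit_index hN D he).resolve_right (by omega)
  obtain ⟨w', h', hw'0, hw'⟩ := h.exists_cons he
  have hrw' : ∀ k < m + 1, w' k ≠ r := by
    rintro (_ | k) hk rfl
    exacts [hrz hw'0, hrw (hw' k ▸ apply_mem_pathVerts (by omega))]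
  have := h'.eq_succ_of_adj hN D hrA hrS hrw' (i := 0) (j := j + 1) (by omega) (by omega)
    (hw'0.symm ▸ hw' j ▸ he'.adj.symm)
  omega

/- Having no chords, the path is properly colored by alternating two colors. -/
theorem exists_isListColoring {α : Type*} {L : V → Finset α} {R : Set V} {r : V} {γ δ : α}
    (h : BoundaryPath A G S w m) (hN : Unseparated A G S) (D : ApexDrawing A G S) (hrA : r ∈ A)
    (hrS : r ∈ S) (hrw : r ∉ pathVerts w m) (hγδ : γ ≠ δ)
    (hL : ∀ i < m, γ ∈ L (w i) ∧ δ ∈ L (w i)) :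
    ∃ ψ, IsListColoring (pathVerts w m) G L R ψ ∧ ∀ i < m, ψ (w i) = alternate γ δ i := by
  let ψ v := alternate γ δ (Function.invFunOn w (Iio m) v)
  have hψ : ∀ i < m, ψ (w i) = alternate γ δ i := fun i hi =>
    congrArg (alternate γ δ) (h.injOn.leftInvOn_invFunOn hi)
  have hadj : ∀ {i j}, i < j → j < m → G.Adj (w i) (w j) → ψ (w i) ≠ ψ (w j) :=
    fun {i j} hij hj hadj => by
      obtain rfl := h.eq_succ_of_adj hN D hrA hrS
        (fun i hi hr => hrw (hr ▸ apply_mem_pathVerts hi)) hij hj hadj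
      rw [hψ i (by omega), hψ _ hj]
      exact alternate_ne_succ hγδ i
  refine ⟨ψ, ⟨fun {v} hv _ => ?_, fun {u v} hu hv huv => ?_⟩, hψ⟩
  · obtain ⟨i, hi, rfl⟩ := mem_pathVerts.1 hv
    rw [hψ i hi]
    obtain h | h := alternate_eq_or_eq γ δ i <;> rw [h]
    exacts [(hL i hi).1, (hL i hi).2]
  · obtain ⟨i, hi, rfl⟩ := mem_pathVerts.1 hu
    obtain ⟨j, hj, rfl⟩ := mem_pathVerts.1 hv
    obtain hij | rfl | hij := lt_trichotomy i j
    exacts [hadj hij hj huv, absurd rfl huv.ne, (hadj hij hi huv.symm).symm]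

end BoundaryPath

end BoundaryPaths

/-- A boundary path that avoids `r₁` and `r₂` and on which all the colors `K` are available. -/
structure FreePath {V α : Type*} [DecidableEq V] (A : Finset V) (G : SimpleGraph V) (S : Set V)
    (L : V → Finset α) (r₁ r₂ : V) (K : Finset α) (w : ℕ → V) (m : ℕ) : Prop
    extends BoundaryPath A G S w m where
  left_notMem : r₁ ∉ pathVerts w m
  right_notMem : r₂ ∉ pathVerts w m
  subset : ∀ {i}, i < m → K ⊆ L (w i)

section Steps

variable {V α : Type*} {A : Finset V} {G : SimpleGraph V} {S R : Set V} {L : V → Finset α}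
  {r₁ r₂ u v p x : V} {K K' : Finset α} {w : ℕ → V} {m i j : ℕ} {a b d e γ δ c₁ c₂ : α} {φ : V → α}

theorem two_le_card_sdiff_pair [DecidableEq α] {s : Finset α} (hs : 3 ≤ s.card)
    (hab : ¬(a ∈ s ∧ b ∈ s)) : 2 ≤ (s \ {a, b}).card := by
  have hinter : ({a, b} ∩ s : Finset α).card ≤ 1 := by
    rw [Finset.card_le_one]
    grind
  have := Finset.card_sdiff_add_card_inter s {a, b}
  rw [Finset.inter_comm] at this
  omega

namespace FreePath

variable [DecidableEq V]

theorem mono (h : FreePath A G S L r₁ r₂ K w m) (hK : K' ⊆ K) :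
    FreePath A G S L r₁ r₂ K' w m :=
  { h with subset := fun hi => hK.trans (h.subset hi) }

theorem boundaryEdge_sdiff (h : FreePath A G S L r₁ r₂ K w m) (hr : BoundaryEdge A G S r₁ r₂)
    (T : Set V) : BoundaryEdge (A \ pathVerts w m) G (S ∪ T) r₁ r₂ :=
  hr.mono (Finset.mem_sdiff.2 ⟨hr.left_mem, h.left_notMem⟩)
    (Finset.mem_sdiff.2 ⟨hr.right_mem, h.right_notMem⟩) subset_union_left

theorem exit_index_unique (h : FreePath A G S L r₁ r₂ K w m) (hN : Unseparated A G S)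
    (D : ApexDrawing A G S) (hr : BoundaryEdge A G S r₁ r₂) (he : PathExit A G S w m i x)
    (he' : PathExit A G S w m j x) : i = j := by
  obtain rfl | hne := eq_or_ne x r₁
  · exact h.toBoundaryPath.exit_index_unique hN D hr.right_mem hr.right_mem_boundary
      h.right_notMem hr.adj.ne' he he'
  · exact h.toBoundaryPath.exit_index_unique hN D hr.left_mem hr.left_mem_boundary
      h.left_notMem hne.symm he he'

theorem last_exit (h : FreePath A G S L r₁ r₂ K w m) (hN : Unseparated A G S)
    (D : ApexDrawing A G S) (hr : BoundaryEdge A G S r₁ r₂) (hu : PathExit A G S w m 0 u)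
    (hx : PathExit A G S w m i x) (hne : ¬(i = 0 ∧ x = u)) : i + 1 = m ∧ x ≠ u := by
  have hxu : x ≠ u := by
    rintro rfl
    exact hne ⟨h.exit_index_unique hN D hr hx hu, rfl⟩
  have him := hx.lt
  refine ⟨by_contra fun hlast => ?_, hxu⟩
  obtain rfl := (h.exit_index hN D hx).resolve_right hlast
  exact hxu (h.exit_unique hN D (by omega) hx hu)

variable [DecidableEq α]

theorem extends_sdiff (h : FreePath A G S L r₁ r₂ K w m) (D : ApexDrawing A G S)
    (hr : BoundaryEdge A G S r₁ r₂) (hK : K.card ≤ 2)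
    (hL : ThomassenLists (A \ pathVerts w m) S L {r₁, r₂}) (hc : c₁ ≠ c₂) :
    Extends (A \ pathVerts w m) G (reserve G S L (pathVerts w m) K) r₁ r₂ (fun _ => True) c₁ c₂ :=
  extends_of_ne (D.deleteBoundary h.pathVerts_subset fun _ => h.mem_boundary_of_mem_pathVerts)
    (h.boundaryEdge_sdiff hr _) (hL.reserve _ hK) hc

theorem governed_sdiff (h : FreePath A G S L r₁ r₂ K w m)
    (hV : VertexGoverned (A \ pathVerts w m) G α) (D : ApexDrawing A G S)
    (hr : BoundaryEdge A G S r₁ r₂) (hK : K.card ≤ 2)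
    (hL : ThomassenLists (A \ pathVerts w m) S L {r₁, r₂}) (hx : PathExit A G S w m i x)
    (hx₁ : x ≠ r₁) (hx₂ : x ≠ r₂) (hxK : 2 ≤ (L x \ K).card) :
    Governed (Extends (A \ pathVerts w m) G (reserve G S L (pathVerts w m) K) r₁ r₂
      fun φ => φ x ∉ K) :=
  hV.avoid (D.deleteBoundary h.pathVerts_subset fun _ => h.mem_boundary_of_mem_pathVerts)
    (h.boundaryEdge_sdiff hr _) (Finset.mem_sdiff.2 ⟨hx.mem, hx.notMem⟩) (.inl hx.mem_boundary)
    hx₁ hx₂ (by rwa [reserve_of_mem hx.mem_boundary]) (hL.reserve _ hK)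

theorem extend_coloring (h : FreePath A G S L r₁ r₂ K w m) (hN : Unseparated A G S)
    (D : ApexDrawing A G S) (hr : BoundaryEdge A G S r₁ r₂) (hγδ : γ ≠ δ) (hγ : γ ∈ K)
    (hδ : δ ∈ K)
    (hφ : IsListColoring (A \ pathVerts w m) G (reserve G S L (pathVerts w m) K) {r₁, r₂} φ)
    (hexit : ∀ {i z}, PathExit A G S w m i z → φ z ≠ alternate γ δ i) :
    ∃ χ, IsListColoring A G L {r₁, r₂} χ ∧ (∀ i < m, χ (w i) = alternate γ δ i) ∧
      ∀ z ∉ pathVerts w m, χ z = φ z := by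
  obtain ⟨ψ, hψ, hψw⟩ := h.exists_isListColoring (R := {r₁, r₂}) hN D hr.left_mem
    hr.left_mem_boundary h.left_notMem hγδ fun i hi => ⟨h.subset hi hγ, h.subset hi hδ⟩
  refine ⟨_, hφ.piecewise_reserve hψ (fun v hv => ?_) ?_ fun v hv z hz hzS hvz => ?_,
    fun i hi => ?_, fun z hz => Finset.piecewise_eq_of_notMem _ _ _ hz⟩
  · obtain ⟨i, hi, rfl⟩ := mem_pathVerts.1 hv
    rw [hψw i hi]
    obtain h | h := alternate_eq_or_eq γ δ i <;> rwa [h]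
  · rintro z - (rfl | rfl)
    exacts [hr.left_mem_boundary, hr.right_mem_boundary]
  · obtain ⟨i, hi, rfl⟩ := mem_pathVerts.1 hv
    rw [Finset.mem_sdiff] at hz
    rw [hψw i hi]
    exact hexit ⟨hi, hz.1, hzS, hz.2, hvz⟩
  · rw [Finset.piecewise_eq_of_mem _ _ _ (apply_mem_pathVerts hi), hψw i hi]

/- If one alternating coloring of the path fails at the only critical exit, the other one does
not. -/
theorem extends_of_exit_unique (h : FreePath A G S L r₁ r₂ {a, b} w m) (hN : Unseparated A G S)
    (D : ApexDrawing A G S) (hr : BoundaryEdge A G S r₁ r₂) (hab : a ≠ b)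
    (hφ : IsListColoring (A \ pathVerts w m) G (reserve G S L (pathVerts w m) {a, b}) {r₁, r₂} φ)
    (huniq : ∀ {i j y z}, PathExit A G S w m i y → PathExit A G S w m j z →
      φ y ∈ ({a, b} : Finset α) → φ z ∈ ({a, b} : Finset α) → i = j ∧ y = z) :
    Extends A G L r₁ r₂ (fun _ => True) (φ r₁) (φ r₂) := by
  obtain ⟨γ, δ, hγδ, hγ, hδ, hexit⟩ : ∃ γ δ, γ ≠ δ ∧ γ ∈ ({a, b} : Finset α) ∧
      δ ∈ ({a, b} : Finset α) ∧ ∀ {i z}, PathExit A G S w m i z → φ z ≠ alternate γ δ i := by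
    have hmem : ∀ {γ δ : α}, γ ∈ ({a, b} : Finset α) → δ ∈ ({a, b} : Finset α) → ∀ i,
        alternate γ δ i ∈ ({a, b} : Finset α) := fun {γ δ} hγ hδ i => by
      obtain h | h := alternate_eq_or_eq γ δ i <;> rwa [h]
    have ha : a ∈ ({a, b} : Finset α) := by simp
    have hb : b ∈ ({a, b} : Finset α) := by simp
    by_cases hbad : ∃ i z, PathExit A G S w m i z ∧ φ z = alternate a b i
    · obtain ⟨i, z, hz, hzi⟩ := hbad
      refine ⟨b, a, hab.symm, hb, ha, fun {j y} hy hyj => ?_⟩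
      obtain ⟨rfl, rfl⟩ := huniq hz hy (hzi ▸ hmem ha hb i) (hyj ▸ hmem hb ha j)
      exact alternate_ne_swap hab i (hzi.symm.trans hyj)
    · exact ⟨a, b, hab, ha, hb, fun hz hzi => hbad ⟨_, _, hz, hzi⟩⟩
  obtain ⟨χ, hχ, -, hχφ⟩ := h.extend_coloring hN D hr hγδ hγ hδ hφ hexit
  exact ⟨χ, hχφ _ h.left_notMem, hχφ _ h.right_notMem, hχ, trivial⟩

theorem governed_of_exit (h : FreePath A G S L r₁ r₂ {a, b} w m)
    (hV : VertexGoverned (A \ pathVerts w m) G α) (hN : Unseparated A G S) (D : ApexDrawing A G S)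
    (hr : BoundaryEdge A G S r₁ r₂) (hab : a ≠ b)
    (hL : ThomassenLists (A \ pathVerts w m) S L {r₁, r₂}) (hx : PathExit A G S w m i x)
    (hx₁ : x ≠ r₁) (hx₂ : x ≠ r₂) (hxK : 2 ≤ (L x \ {a, b}).card) :
    Governed (Extends A G L r₁ r₂ fun _ => True) := by
  refine (h.governed_sdiff hV D hr Finset.card_le_two hL hx hx₁ hx₂ hxK).mono ?_
  rintro _ _ - ⟨φ, rfl, rfl, hφ, hxφ⟩
  refine h.extends_of_exit_unique hN D hr hab hφ fun hy hz hyφ hzφ => ?_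
  obtain ⟨-, rfl⟩ | ⟨-, rfl⟩ | heq := h.exit_eq_or_eq_or_eq hN D hx hy hz
  exacts [absurd hyφ hxφ, absurd hzφ hxφ, heq]

theorem governed_of_forall_exit (h : FreePath A G S L r₁ r₂ {a, b} w m) (hN : Unseparated A G S)
    (D : ApexDrawing A G S) (hr : BoundaryEdge A G S r₁ r₂) (hab : a ≠ b)
    (hL : ThomassenLists (A \ pathVerts w m) S L {r₁, r₂})
    (hroot : ∀ {i z}, PathExit A G S w m i z → z = r₁ ∨ z = r₂) :
    Governed (Extends A G L r₁ r₂ fun _ => True) := by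
  refine .inr (.inr ⟨a, b, fun c₁ c₂ hc hne => ?_⟩)
  obtain ⟨φ, rfl, rfl, hφ, -⟩ := h.extends_sdiff D hr Finset.card_le_two hL hc
  refine h.extends_of_exit_unique hN D hr hab hφ fun {i j y z} hy hz hyφ hzφ => ?_
  obtain rfl | hyz := eq_or_ne y z
  · exact ⟨h.exit_index_unique hN D hr hy hz, rfl⟩
  · have := hroot hy
    have := hroot hz
    grind

end FreePath

theorem Unseparated.vertexGoverned [DecidableEq V] (hN : Unseparated A G S)
    (ih : ∀ B ⊂ A, VertexGoverned B G α) (D : ApexDrawing A G S)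
    (hr : BoundaryEdge A G S r₁ r₂) (hpA : p ∈ A) (hpS : p ∈ S) (hp₁ : p ≠ r₁) (hp₂ : p ≠ r₂)
    (hp : 2 ≤ (L p).card) (hL : ThomassenLists A S L {r₁, r₂, p}) :
    Governed (Extends A G L r₁ r₂ fun _ => True) := by
  classical
  obtain ⟨a, ha, b, hb, hab⟩ := Finset.one_lt_card.1 hp
  obtain ⟨w, m, hw, hwX, hpw, hmax⟩ := BoundaryPath.exists_longest_through (G := G)
    (X := {z | z ≠ r₁ ∧ z ≠ r₂ ∧ a ∈ L z ∧ b ∈ L z}) hpA hpS ⟨hp₁, hp₂, ha, hb⟩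
  have h : FreePath A G S L r₁ r₂ {a, b} w m :=
    { hw with
      left_notMem := fun h => by
        obtain ⟨i, hi, rfl⟩ := mem_pathVerts.1 h
        exact (hwX i hi).1 rfl
      right_notMem := fun h => by
        obtain ⟨i, hi, rfl⟩ := mem_pathVerts.1 h
        exact (hwX i hi).2.1 rfl
      subset := fun {i} hi => by
        simpa [Finset.insert_subset_iff] using (hwX i hi).2.2 }
  have hL' : ThomassenLists (A \ pathVerts w m) S L {r₁, r₂} := hL.mono Finset.sdiff_subset <| by
    rintro z hz (hzr | hzr | rfl)
    exacts [.inl hzr, .inr hzr, absurd hpw (Finset.mem_sdiff.1 hz).2]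
  by_cases hroot : ∀ i z, PathExit A G S w m i z → z = r₁ ∨ z = r₂
  · exact h.governed_of_forall_exit hN D hr hab hL' fun he => hroot _ _ he
  · push Not at hroot
    obtain ⟨i, x, hx, hx₁, hx₂⟩ := hroot
    have hcard : 3 ≤ (L x).card :=
      hL'.three_le (Finset.mem_sdiff.2 ⟨hx.mem, hx.notMem⟩) (by simp [hx₁, hx₂])
    refine h.governed_of_exit (ih _ ?_) hN D hr hab hL' hx hx₁ hx₂
      (two_le_card_sdiff_pair hcard fun hxL => hmax hx (hw.exit_index hN D hx) ⟨hx₁, hx₂, hxL⟩)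
    exact hw.sdiff_pathVerts_ssubset (Nat.zero_lt_of_lt hx.lt)

namespace FreePath

variable [DecidableEq V] [DecidableEq α]

/- One of the two ends of the edge `u (w 0)` gets the color `d`. -/
theorem extends_avoid_pair (h : FreePath A G S L r₁ r₂ {e, d} w m) (hN : Unseparated A G S)
    (D : ApexDrawing A G S) (hr : BoundaryEdge A G S r₁ r₂) (hed : e ≠ d) (hda : d ≠ a)
    (hdb : d ≠ b) (hu : PathExit A G S w m 0 u)
    (hφ : IsListColoring (A \ pathVerts w m) G (reserve G S L (pathVerts w m) {e, d}) {r₁, r₂} φ)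
    (hexit : ∀ {i z}, PathExit A G S w m i z → i = 0 ∧ z = u ∨ φ z ∉ ({e, d} : Finset α)) :
    Extends A G L r₁ r₂ (fun χ => s(χ u, χ (w 0)) ≠ s(a, b)) (φ r₁) (φ r₂) := by
  have hd : ∀ {c c' : α}, c = d ∨ c' = d → s(c, c') ≠ s(a, b) := by grind
  obtain ⟨γ, δ, hγδ, hγ, hδ, hne, hud⟩ : ∃ γ δ, γ ≠ δ ∧ γ ∈ ({e, d} : Finset α) ∧
      δ ∈ ({e, d} : Finset α) ∧ φ u ≠ γ ∧ (φ u = d ∨ γ = d) := by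
    by_cases hud : φ u = d
    · exact ⟨e, d, hed, by simp, by simp, hud ▸ hed.symm, .inl hud⟩
    · exact ⟨d, e, hed.symm, by simp, by simp, hud, .inr rfl⟩
  obtain ⟨χ, hχ, hχw, hχφ⟩ := h.extend_coloring hN D hr hγδ hγ hδ hφ fun {i z} hz => by
    obtain ⟨rfl, rfl⟩ | hzφ := hexit hz
    · exact hne
    · rintro hzi
      refine hzφ (hzi ▸ ?_)
      obtain h | h := alternate_eq_or_eq γ δ i <;> rwa [h]
  refine ⟨χ, hχφ _ h.left_notMem, hχφ _ h.right_notMem, hχ, hd ?_⟩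
  rw [hχφ u hu.notMem, hχw 0 hu.lt]
  exact hud

theorem governed_avoid_pair_of_forall_exit (h : FreePath A G S L r₁ r₂ {e, d} w m)
    (hN : Unseparated A G S) (D : ApexDrawing A G S) (hr : BoundaryEdge A G S r₁ r₂)
    (hL : ThomassenLists (A \ pathVerts w m) S L {r₁, r₂}) (hed : e ≠ d) (hda : d ≠ a)
    (hdb : d ≠ b) (hu : PathExit A G S w m 0 u)
    (hexit : ∀ {i z}, PathExit A G S w m i z → i = 0 ∧ z = u) :
    Governed (Extends A G L r₁ r₂ fun χ => s(χ u, χ (w 0)) ≠ s(a, b)) := by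
  have : Nonempty α := ⟨e⟩
  refine .of_forall fun c₁ c₂ hc => ?_
  obtain ⟨φ, rfl, rfl, hφ, -⟩ := h.extends_sdiff D hr Finset.card_le_two hL hc
  exact h.extends_avoid_pair hN D hr hed hda hdb hu hφ fun hz => .inl (hexit hz)

theorem governed_avoid_pair_of_exit (h : FreePath A G S L r₁ r₂ {a, b, d} w m)
    (hV : VertexGoverned (A \ pathVerts w m) G α) (hN : Unseparated A G S) (D : ApexDrawing A G S)
    (hr : BoundaryEdge A G S r₁ r₂) (hL : ThomassenLists (A \ pathVerts w m) S L {r₁, r₂})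
    (hda : d ≠ a) (hdb : d ≠ b) (hu : PathExit A G S w m 0 u) (hx : PathExit A G S w m i x)
    (hexit : ∀ {j z}, PathExit A G S w m j z → j = 0 ∧ z = u ∨ z = x)
    (hx₁ : x ≠ r₁) (hx₂ : x ≠ r₂) (hxL : ¬(a ∈ L x ∧ b ∈ L x ∧ d ∈ L x)) :
    Governed (Extends A G L r₁ r₂ fun χ => s(χ u, χ (w 0)) ≠ s(a, b)) := by
  obtain ⟨e, he, hex⟩ : ∃ e ∈ ({a, b} : Finset α), ¬(e ∈ L x ∧ d ∈ L x) := by grind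
  have hxK : 2 ≤ (L x \ {e, d}).card := two_le_card_sdiff_pair
    (hL.three_le (Finset.mem_sdiff.2 ⟨hx.mem, hx.notMem⟩) (by simp [hx₁, hx₂])) hex
  have h' : FreePath A G S L r₁ r₂ {e, d} w m := h.mono (by grind)
  refine (h'.governed_sdiff hV D hr Finset.card_le_two hL hx hx₁ hx₂ hxK).mono ?_
  rintro _ _ - ⟨φ, rfl, rfl, hφ, hxφ⟩
  exact h'.extends_avoid_pair hN D hr (by grind) hda hdb hu hφ fun hz =>
    (hexit hz).imp_right (by rintro rfl; exact hxφ)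

theorem governed_avoid_pair_of_root (h : FreePath A G S L r₁ r₂ {a, b, d} w m)
    (hN : Unseparated A G S) (D : ApexDrawing A G S) (hr : BoundaryEdge A G S r₁ r₂)
    (hL : ThomassenLists (A \ pathVerts w m) S L {r₁, r₂}) (hab : a ≠ b) (hda : d ≠ a)
    (hdb : d ≠ b) (hu : PathExit A G S w m 0 u)
    (hexit : ∀ {j z}, PathExit A G S w m j z → j = 0 ∧ z = u ∨ z = x) (hx : x = r₁ ∨ x = r₂) :
    Governed (Extends A G L r₁ r₂ fun χ => s(χ u, χ (w 0)) ≠ s(a, b)) := by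
  have hfree : ∀ {e}, e ∈ ({a, b} : Finset α) → FreePath A G S L r₁ r₂ {e, d} w m := fun he =>
    h.mono (by grind)
  have hchoose : ∀ c, ∃ e ∈ ({a, b} : Finset α), e ≠ c := fun c =>
    Finset.exists_mem_ne (by rw [Finset.card_pair hab]; decide) c
  have hextends : ∀ c₁ c₂ c, c₁ ≠ c₂ → c ≠ d → (∀ φ : V → α, φ r₁ = c₁ → φ r₂ = c₂ → φ x = c) →
      Extends A G L r₁ r₂ (fun χ => s(χ u, χ (w 0)) ≠ s(a, b)) c₁ c₂ := fun c₁ c₂ c hc hcd hx => by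
    obtain ⟨e, he, hec⟩ := hchoose c
    obtain ⟨φ, rfl, rfl, hφ, -⟩ := (hfree he).extends_sdiff D hr Finset.card_le_two hL hc
    have hxφ := hx φ rfl rfl
    exact (hfree he).extends_avoid_pair hN D hr (by grind) hda hdb hu hφ fun hz =>
      (hexit hz).imp_right (by grind)
  obtain rfl | rfl := hx
  · exact .inl ⟨d, fun c₁ c₂ hc hd => hextends c₁ c₂ c₁ hc hd fun _ h _ => h⟩
  · exact .inr (.inl ⟨d, fun c₁ c₂ hc hd => hextends c₁ c₂ c₂ hc hd fun _ _ h => h⟩)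

end FreePath

theorem Unseparated.governed_avoid_pair [DecidableEq V] (hN : Unseparated A G S)
    (ih : ∀ B ⊂ A, VertexGoverned B G α) (D : ApexDrawing A G S) (hr : BoundaryEdge A G S r₁ r₂)
    (huv : BoundaryEdge A G S u v) (hv₁ : v ≠ r₁) (hv₂ : v ≠ r₂)
    (hL : ThomassenLists A S L {r₁, r₂}) (hab : a ≠ b) (ha : a ∈ L v) (hb : b ∈ L v) :
    Governed (Extends A G L r₁ r₂ fun φ => s(φ u, φ v) ≠ s(a, b)) := by
  classical
  obtain ⟨d, hd, hdab⟩ := Finset.exists_mem_notMem_of_card_lt_card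
    ((Finset.card_le_two (a := a) (b := b)).trans_lt (hL.three_le huv.right_mem (by simp [*])))
  obtain ⟨hda, hdb⟩ : d ≠ a ∧ d ≠ b := by simpa using hdab
  obtain ⟨w, m, hm, hw, hwX, rfl, hmax⟩ := BoundaryPath.exists_longest_from (G := G)
    (X := {z | z ≠ r₁ ∧ z ≠ r₂ ∧ z ≠ u ∧ a ∈ L z ∧ b ∈ L z ∧ d ∈ L z}) huv.right_mem
    huv.right_mem_boundary ⟨hv₁, hv₂, huv.adj.ne', ha, hb, hd⟩
  have hne : ∀ {z}, (∀ i < m, w i ≠ z) → z ∉ pathVerts w m := fun hz h =>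
    let ⟨i, hi, hiz⟩ := mem_pathVerts.1 h
    hz i hi hiz
  have h : FreePath A G S L r₁ r₂ {a, b, d} w m :=
    { hw with
      left_notMem := hne fun i hi => (hwX i hi).1
      right_notMem := hne fun i hi => (hwX i hi).2.1
      subset := fun {i} hi => by
        simpa [Finset.insert_subset_iff] using (hwX i hi).2.2.2 }
  have hu : PathExit A G S w m 0 u :=
    ⟨hm, huv.left_mem, huv.left_mem_boundary, hne fun i hi => (hwX i hi).2.2.1, huv.adj.symm⟩
  have hL' := hL.mono (Finset.sdiff_subset (t := pathVerts w m)) fun _ _ => id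
  by_cases hother : ∀ i z, PathExit A G S w m i z → i = 0 ∧ z = u
  · exact (h.mono (by grind)).governed_avoid_pair_of_forall_exit (e := a) hN D hr hL' hda.symm hda
      hdb hu fun hz => hother _ _ hz
  push Not at hother
  obtain ⟨k, x, hx, hxu⟩ := hother
  have hexit : ∀ {j z}, PathExit A G S w m j z → j = 0 ∧ z = u ∨ z = x := fun hz => by
    obtain h | h | h := hw.exit_eq_or_eq_or_eq hN D hu hx hz
    exacts [absurd h.2.symm (hxu h.1.symm), .inl ⟨h.1.symm, h.2.symm⟩, .inr h.2.symm]
  by_cases hroot : x = r₁ ∨ x = r₂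
  · exact h.governed_avoid_pair_of_root hN D hr hL' hab hda hdb hu hexit hroot
  push Not at hroot
  obtain ⟨hkm, hxu'⟩ := h.last_exit hN D hr hu hx fun hk => hxu hk.1 hk.2
  exact h.governed_avoid_pair_of_exit (ih _ (hw.sdiff_pathVerts_ssubset hm)) hN D hr hL' hda hdb hu
    hx hexit hroot.1 hroot.2 fun hxL => hmax hx hkm ⟨hroot.1, hroot.2, hxu', hxL⟩

theorem Unseparated.edgeGoverned [DecidableEq V] (hN : Unseparated A G S)
    (ih : ∀ B ⊂ A, VertexGoverned B G α) (hV : VertexGoverned A G α) (D : ApexDrawing A G S)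
    (hr : BoundaryEdge A G S r₁ r₂) (huv : BoundaryEdge A G S u v)
    (hL : ThomassenLists A S L {r₁, r₂}) (a b : α) :
    Governed (Extends A G L r₁ r₂ fun φ => s(φ u, φ v) ≠ s(a, b)) := by
  classical
  by_cases hroot : s(u, v) = s(r₁, r₂)
  · exact governed_avoid_pair_of_eq D hr hroot hL a b
  wlog hv : v ≠ r₁ ∧ v ≠ r₂ generalizing u v
  · have hu : u ≠ r₁ ∧ u ≠ r₂ := by
      have := huv.adj.ne
      grind
    exact (this huv.symm (Sym2.eq_swap ▸ hroot) hu).mono fun c₁ c₂ _ h =>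
      h.mono (fun _ _ => subset_rfl) fun φ _ hφ => Sym2.eq_swap ▸ hφ
  by_cases hab : a = b
  · have : Nonempty α := ⟨a⟩
    refine .of_forall fun c₁ c₂ hc => (extends_of_ne D hr hL hc).mono (fun _ _ => subset_rfl)
      fun φ hφ _ => ?_
    have := hφ.ne huv.left_mem huv.right_mem huv.adj
    grind
  by_cases hmem : a ∈ L v ∧ b ∈ L v
  · exact hN.governed_avoid_pair ih D hr huv hv.1 hv.2 hL hab hmem.1 hmem.2
  have hcard : 2 ≤ (L v \ {a, b}).card :=
    two_le_card_sdiff_pair (hL.three_le huv.right_mem (by simp [hv])) hmem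
  refine (hV.avoid D hr huv.right_mem huv.right_mem_boundary hv.1 hv.2 hcard hL).mono
    fun c₁ c₂ _ h => h.mono (fun _ _ => subset_rfl) fun φ _ hφ => ?_
  grind

theorem vertexGoverned_of_ssubset (ih : ∀ B ⊂ A, VertexGoverned B G α ∧ EdgeGoverned B G α) :
    VertexGoverned A G α := by
  classical
  intro S L r₁ r₂ p D hr hpA hpS hp₁ hp₂ hp hL
  by_cases hN : Unseparated A G S
  · exact hN.vertexGoverned (fun B hB => (ih B hB).1) D hr hpA hpS hp₁ hp₂ hp hL
  · obtain ⟨u, v, A₁, A₂, h⟩ := not_unseparated.1 hN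
    exact vertexGoverned_of_separation ih D hr hpA hpS hp₁ hp₂ hp hL h

theorem edgeGoverned_of_ssubset (ih : ∀ B ⊂ A, VertexGoverned B G α ∧ EdgeGoverned B G α) :
    EdgeGoverned A G α := by
  classical
  intro S L r₁ r₂ u v D hr huv hL a b
  by_cases hN : Unseparated A G S
  · exact hN.edgeGoverned (fun B hB => (ih B hB).1) (vertexGoverned_of_ssubset ih) D hr huv hL a b
  · obtain ⟨u', v', A₁, A₂, h⟩ := not_unseparated.1 hN
    exact edgeGoverned_of_separation ih D hr huv hL a b h

variable (G α) in
theorem vertexGoverned_and_edgeGoverned (A : Finset V) :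
    VertexGoverned A G α ∧ EdgeGoverned A G α := by
  induction A using Finset.strongInduction with
  | H A ih => exact ⟨vertexGoverned_of_ssubset ih, edgeGoverned_of_ssubset ih⟩

end Steps

section TwoShortLists

variable {V α : Type*} {A : Finset V} {G : SimpleGraph V}
  {S : Set V} {L : V → Finset α} {p q p₁ p₂ r₁ r₂ : V} {Q : (V → α) → Prop} {c₁ c₂ : α}

theorem Extends.exists_isListColoring (h : Extends A G L r₁ r₂ Q c₁ c₂) (h₁ : c₁ ∈ L r₁)
    (h₂ : c₂ ∈ L r₂) : ∃ φ, IsListColoring A G L ∅ φ := by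
  obtain ⟨φ, rfl, rfl, hφ, -⟩ := h
  refine ⟨φ, hφ.of_mem ?_⟩
  rintro v - (rfl | rfl) -
  exacts [h₁, h₂]

theorem exists_isListColoring_of_boundaryEdge (D : ApexDrawing A G S)
    (hpq : BoundaryEdge A G S p₂ q) (hp₁A : p₁ ∈ A) (hp₁S : p₁ ∈ S) (hp : p₁ ≠ p₂)
    (hL₁ : 2 ≤ (L p₁).card) (hL₂ : 2 ≤ (L p₂).card) (hL : ThomassenLists A S L {p₁, p₂}) :
    ∃ φ, IsListColoring A G L ∅ φ := by
  obtain rfl | hq := eq_or_ne p₁ q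
  · obtain ⟨c₁, hc₁⟩ := Finset.card_pos.1 (zero_lt_two.trans_le hL₁)
    obtain ⟨c₂, hc₂, hc⟩ := Finset.exists_mem_ne hL₂ c₁
    exact (extends_of_ne D hpq.symm hL hc.symm).exists_isListColoring hc₁ hc₂
  · have hgov := (vertexGoverned_and_edgeGoverned α G A).1 D hpq hp₁A hp₁S hp hq hL₁ <|
      hL.mono subset_rfl <| by
        rintro v - (rfl | rfl) <;> simp
    obtain ⟨c₂, hc₂, c, hc, hext⟩ := hgov.exists_pair hL₂
      (hL.three_le hpq.right_mem (by simp [hq.symm, hpq.adj.ne']))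
    exact hext.exists_isListColoring hc₂ hc

theorem exists_isListColoring_of_isolated (D : ApexDrawing A G S)
    (hiso : ∀ q, ¬ BoundaryEdge A G S p₂ q) (hp₁A : p₁ ∈ A) (hp₁S : p₁ ∈ S) (hp₂A : p₂ ∈ A)
    (hp₂S : p₂ ∈ S) (hp : p₁ ≠ p₂) (hL₁ : (L p₁).Nonempty) (hL₂ : (L p₂).Nonempty)
    (hL : ThomassenLists A S L {p₁, p₂}) : ∃ φ, IsListColoring A G L ∅ φ := by
  classical
  obtain ⟨c₁, hc₁⟩ := hL₁
  obtain ⟨c₂, hc₂⟩ := hL₂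
  have : Nonempty α := ⟨c₁⟩
  have hL' : ThomassenLists (A \ {p₂}) S L {p₁} := hL.mono Finset.sdiff_subset <| by
    rintro v hv (rfl | rfl)
    exacts [rfl, absurd hv (by simp)]
  obtain ⟨φ, rfl, hφ⟩ := (thomassenExtendable (A \ {p₂}) G).vertex (c := c₁)
    (D.deleteBoundary (by simpa) (by simpa)) (by simp [hp₁A, hp]) (.inl hp₁S)
    (hL'.reserve {p₂} (K := {c₂}) (by simp))
  refine ⟨_, (hφ.update_reserve (Finset.mem_singleton_self c₂) (fun _ => hc₂) ?_
    fun z hz hzS hadj => absurd ⟨hp₂A, hz, hp₂S, hzS, hadj⟩ (hiso z)).of_mem ?_⟩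
  · rintro v - rfl
    exact hp₁S
  · rintro v - rfl -
    rwa [Function.update_of_ne hp]

theorem exists_isListColoring_of_two_le (D : ApexDrawing A G S) (hp₁A : p₁ ∈ A) (hp₁S : p₁ ∈ S)
    (hp₂A : p₂ ∈ A) (hp₂S : p₂ ∈ S) (hL₁ : 2 ≤ (L p₁).card) (hL₂ : 2 ≤ (L p₂).card)
    (hL : ThomassenLists A S L {p₁, p₂}) : ∃ φ, IsListColoring A G L ∅ φ := by
  have hne₁ : (L p₁).Nonempty := Finset.card_pos.1 (zero_lt_two.trans_le hL₁)
  obtain rfl | hp := eq_or_ne p₁ p₂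
  · obtain ⟨c, hc⟩ := hne₁
    have : Nonempty α := ⟨c⟩
    obtain ⟨φ, rfl, hφ⟩ := (thomassenExtendable A G).vertex (c := c) D hp₁A hp₁S
      (by simpa using hL)
    exact ⟨φ, hφ.of_mem (by rintro v - rfl -; exact hc)⟩
  by_cases hiso : ∀ q, ¬ BoundaryEdge A G S p₂ q
  · exact exists_isListColoring_of_isolated D hiso hp₁A hp₁S hp₂A hp₂S hp hne₁
      (Finset.card_pos.1 (zero_lt_two.trans_le hL₂)) hL
  · push Not at hiso
    obtain ⟨q, hpq⟩ := hiso
    exact exists_isListColoring_of_boundaryEdge D hpq hp₁A hp₁S hp hL₁ hL₂ hL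

end TwoShortLists

theorem two_lists_of_size_two_general {V : Type u} (G : PlaneGraph V) (p1 p2 : V)
    (L : V → Finset ℕ) (hp1 : p1 ∈ G.boundaryVerts) (hp2 : p2 ∈ G.boundaryVerts)
    (h5 : ∀ v ∈ G.verts, ¬ G.OnOuter v → 5 ≤ (L v).card)
    (h3 : ∀ v ∈ G.verts, v ≠ p1 → v ≠ p2 → 3 ≤ (L v).card)
    (h1 : 2 ≤ (L p1).card) (h2 : 2 ≤ (L p2).card) :
    G.HasLColoring L := by
  classical
  obtain ⟨D⟩ := G.nonempty_apexDrawing hp1.2.outerFace_nonempty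
  have hverts : ∀ {v}, v ∈ G.finite_verts.toFinset ↔ v ∈ G.verts := G.finite_verts.mem_toFinset
  obtain ⟨φ, hφ⟩ := exists_isListColoring_of_two_le D (hverts.2 hp1.1) hp1.2 (hverts.2 hp2.1) hp2.2
    h1 h2 ⟨fun hv hvp => h3 _ (hverts.1 hv) (fun h => hvp (.inl h)) fun h => hvp (.inr h),
      fun hv _ => h5 _ (hverts.1 hv)⟩
  exact ⟨φ, fun v hv => hφ.mem (hverts.2 hv) (by simp), fun u v huv =>
    hφ.ne (hverts.2 (G.adj_mem u v huv)) (hverts.2 (G.adj_mem v u (G.adj_symm u v huv))) huv⟩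

/-- Theorem 1.2, two vertices with lists of size two:
Let `G` be a plane graph with outer cycle `C`, let `p₁, p₂ ∈ V(C)`, and let
`L` be a list assignment for `G` with `|L(v)| ≥ 5` for `v ∈ V(G) − V(C)`,
`|L(v)| ≥ 3` for `v ∈ V(C) − {p₁, p₂}`, `|L(p₁)| ≥ 2` and `|L(p₂)| ≥ 2`.
Then `G` has an `L`-coloring. -/
theorem two_lists_of_size_two {V : Type u} (G : PlaneGraph V) (C : List V)
    (p1 p2 : V) (L : V → Finset ℕ)
    (hC : G.IsOuterCycle C)
    (hp1 : p1 ∈ C) (hp2 : p2 ∈ C)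
    (hnonempty : ∀ v ∈ G.verts, (L v).Nonempty)
    (h5 : ∀ v ∈ G.verts, v ∉ C → 5 ≤ (L v).card)
    (h3 : ∀ v ∈ C, v ≠ p1 → v ≠ p2 → 3 ≤ (L v).card)
    (h1 : 2 ≤ (L p1).card) (h2 : 2 ≤ (L p2).card) :
    G.HasLColoring L :=
  two_lists_of_size_two_general G p1 p2 L (hC.mem_boundaryVerts hp1) (hC.mem_boundaryVerts hp2)
    (fun v hv hvS => h5 v hv fun hvC => hvS (hC.mem_boundaryVerts hvC).2)
    (fun v hv hvp1 hvp2 => by_cases (fun hvC : v ∈ C => h3 v hvC hvp1 hvp2) fun hvC =>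
      (by decide : 3 ≤ 5).trans (h5 v hv hvC)) h1 h2
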